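/- arXiv:1806.08872 — 6 statements merged into one kernel-verified Lean document; each statement's English description precedes it below -/
import Mathlib

section
/- The set of pseudo-square-free positive integers has natural density 1; that is, if D denotes the set of pseudo-square-free positive integers, then |D ∩ {1,…,N}| / N → 1 as N → ∞. -/
/-- A positive integer `n` is *pseudo-square-free* if for every prime `p` dividing `n`:
if `p > log log n` then `p² ∤ n`, and if `p ≤ log log n` then `p ^ (v_p n) ≤ log n`,
where `v_p n` is the `p`-adic valuation of `n` and `log` is the natural logarithm. -/
def PseudoSquareFree (n : ℕ) : Prop :=
  ∀ p : ℕ, p.Prime → p ∣ n →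
    (Real.log (Real.log n) < (p : ℝ) → ¬ (p ^ 2 ∣ n)) ∧
    ((p : ℝ) ≤ Real.log (Real.log n) → (p : ℝ) ^ (n.factorization p) ≤ Real.log n)

/-!
If `n` is not pseudo-square-free, then a prime power `p ^ k > log log n` with `k ≥ 2` divides `n`.
With `m = p ^ ⌊k / 2⌋` we get a square divisor `m ^ 2 ∣ n` such that `m ^ 3 ≥ p ^ k`, so `m → ∞` as
`n → ∞` through the exceptional integers. Since `∑ 1 / m ^ 2` converges, the integers divisible by
a square `m ^ 2` with `m > K` have an upper density that tends to `0` as `K → ∞`.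
-/

open Filter Topology

/-- The set `A` of natural numbers has natural density `δ`. The proportion of `A` is taken in
`{1, …, N}`, so whether `0` belongs to `A` does not matter. -/
def HasNatDensity (A : Set ℕ) (δ : ℝ) : Prop :=
  Tendsto (fun N : ℕ => ((Set.Icc 1 N ∩ A).ncard : ℝ) / N) atTop (𝓝 δ)

theorem HasNatDensity.compl {A : Set ℕ} {δ : ℝ} (hA : HasNatDensity A δ) :
    HasNatDensity Aᶜ (1 - δ) := by
  refine (hA.const_sub 1).congr' ?_
  filter_upwards [eventually_ne_atTop 0] with N hN
  have hsplit : (Set.Icc 1 N ∩ A).ncard + (Set.Icc 1 N ∩ Aᶜ).ncard = N := by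
    rw [← Set.sdiff_eq, Set.ncard_inter_add_ncard_sdiff_eq_ncard _ _ (Set.finite_Icc 1 N),
      Set.ncard_Icc_nat, Nat.add_sub_cancel]
  have hN' : (N : ℝ) ≠ 0 := Nat.cast_ne_zero.2 hN
  rw [sub_eq_iff_eq_add', ← add_div, eq_div_iff hN', one_mul]
  exact_mod_cast hsplit.symm

theorem hasNatDensity_zero_of_forall_ncard_le {A : Set ℕ}
    (hA : ∀ ε > 0, ∃ C : ℝ, ∀ N : ℕ, ((Set.Icc 1 N ∩ A).ncard : ℝ) ≤ C + N * ε) :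
    HasNatDensity A 0 := by
  refine Metric.tendsto_nhds.2 fun ε hε => ?_
  obtain ⟨C, hC⟩ := hA (ε / 2) (half_pos hε)
  filter_upwards [eventually_gt_atTop 0,
    tendsto_natCast_atTop_atTop.eventually_gt_atTop (C / (ε / 2))] with N hN hCN
  have hN' : (0 : ℝ) < N := Nat.cast_pos.2 hN
  rw [div_lt_iff₀ (half_pos hε)] at hCN
  rw [Real.dist_0_eq_abs, abs_of_nonneg (by positivity), div_lt_iff₀ hN']
  linarith [hC N]

-- For `a = 0` this holds because `0⁻¹ = 0` and `0` divides no `n ≥ 1`.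
theorem ncard_Icc_inter_dvd_le (a N : ℕ) :
    ((Set.Icc 1 N ∩ {n | a ∣ n}).ncard : ℝ) ≤ N * (a : ℝ)⁻¹ := by
  have hcard : (Set.Icc 1 N ∩ {n | a ∣ n}).ncard = N / a := by
    rw [← Nat.Ioc_filter_dvd_card_eq_div, ← Set.ncard_coe_finset]
    congr 1
    ext n
    simp [Nat.succ_le_iff]
  rw [hcard, ← div_eq_mul_inv]
  exact Nat.cast_div_le

theorem ncard_Icc_inter_exists_dvd_le {ι : Type*} {d : ι → ℕ}
    (hd : Summable fun i => (d i : ℝ)⁻¹) (N : ℕ) :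
    ((Set.Icc 1 N ∩ {n | ∃ i, d i ∣ n}).ncard : ℝ) ≤ N * ∑' i, (d i : ℝ)⁻¹ := by
  obtain ⟨I, hI⟩ : ∃ I : Finset ι,
      Set.Icc 1 N ∩ {n | ∃ i, d i ∣ n} ⊆ ⋃ i ∈ I, Set.Icc 1 N ∩ {n | d i ∣ n} := by
    choose i hi using fun n : ↥(Set.Icc 1 N ∩ {n | ∃ i, d i ∣ n}) => n.2.2
    refine ⟨(Set.finite_range i).toFinset, fun n hn => ?_⟩
    exact Set.mem_biUnion (by simp) ⟨hn.1, hi ⟨n, hn⟩⟩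
  have hfin : (⋃ i ∈ I, Set.Icc 1 N ∩ {n | d i ∣ n}).Finite :=
    (Set.finite_Icc 1 N).subset (Set.iUnion₂_subset fun _ _ => Set.inter_subset_left)
  calc ((Set.Icc 1 N ∩ {n | ∃ i, d i ∣ n}).ncard : ℝ)
      ≤ ∑ i ∈ I, ((Set.Icc 1 N ∩ {n | d i ∣ n}).ncard : ℝ) := by
        exact_mod_cast (Set.ncard_le_ncard hI hfin).trans (I.set_ncard_biUnion_le _)
    _ ≤ ∑ i ∈ I, N * (d i : ℝ)⁻¹ := Finset.sum_le_sum fun i _ => ncard_Icc_inter_dvd_le (d i) N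
    _ = N * ∑ i ∈ I, (d i : ℝ)⁻¹ := (Finset.mul_sum ..).symm
    _ ≤ N * ∑' i, (d i : ℝ)⁻¹ := by
        gcongr
        exact hd.sum_le_tsum I fun i _ => by positivity

theorem hasNatDensity_zero_of_summable_inv {ι : Type*} {d : ι → ℕ} {A : Set ℕ}
    (hd : Summable fun i => (d i : ℝ)⁻¹)
    (hA : ∀ F : Finset ι, ∀ᶠ n in atTop, n ∈ A → ∃ i ∉ F, d i ∣ n) :
    HasNatDensity A 0 := by
  refine hasNatDensity_zero_of_forall_ncard_le fun ε hε => ?_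
  obtain ⟨F, hF⟩ : ∃ F : Finset ι, ∑' i : {i // i ∉ F}, (d i : ℝ)⁻¹ < ε :=
    ((tendsto_tsum_compl_atTop_zero fun i => (d i : ℝ)⁻¹).eventually_lt_const hε).exists
  obtain ⟨n₀, hn₀⟩ := eventually_atTop.1 (hA F)
  refine ⟨n₀, fun N => ?_⟩
  have hcover : Set.Icc 1 N ∩ A ⊆
      Set.Iio n₀ ∪ Set.Icc 1 N ∩ {n | ∃ i : {i // i ∉ F}, d i ∣ n} := fun n hn => by
    rcases lt_or_ge n n₀ with hlt | hge
    · exact .inl hlt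
    · obtain ⟨i, hiF, hi⟩ := hn₀ n hge hn.2
      exact .inr ⟨hn.1, ⟨i, hiF⟩, hi⟩
  have hcard := (Set.ncard_le_ncard hcover).trans (Set.ncard_union_le _ _)
  rw [Set.ncard_Iio_nat] at hcard
  calc ((Set.Icc 1 N ∩ A).ncard : ℝ)
      ≤ n₀ + ((Set.Icc 1 N ∩ {n | ∃ i : {i // i ∉ F}, d i ∣ n}).ncard : ℝ) := by
        exact_mod_cast hcard
    _ ≤ n₀ + N * ∑' i : {i // i ∉ F}, (d i : ℝ)⁻¹ := by
        gcongr
        exact ncard_Icc_inter_exists_dvd_le (hd.subtype _) N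
    _ ≤ n₀ + N * ε := by gcongr

theorem hasNatDensity_zero_of_exists_sq_dvd {A : Set ℕ}
    (hA : ∀ K : ℕ, ∀ᶠ n in atTop, n ∈ A → ∃ m > K, m ^ 2 ∣ n) : HasNatDensity A 0 := by
  have hsum : Summable fun m : ℕ => ((m ^ 2 : ℕ) : ℝ)⁻¹ := by
    simpa only [Nat.cast_pow] using Real.summable_nat_pow_inv.2 one_lt_two
  refine hasNatDensity_zero_of_summable_inv hsum fun F => ?_
  filter_upwards [hA (F.sup id)] with n hn hnA
  obtain ⟨m, hm, hmn⟩ := hn hnA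
  exact ⟨m, fun hmF => hm.not_ge (Finset.le_sup (f := id) hmF), hmn⟩

theorem exists_sq_dvd_pow_and_pow_le_cube (a : ℕ) {k : ℕ} (hk : 2 ≤ k) :
    ∃ m, m ^ 2 ∣ a ^ k ∧ a ^ k ≤ m ^ 3 := by
  refine ⟨a ^ (k / 2), ?_, ?_⟩
  · rw [← pow_mul]
    exact pow_dvd_pow a (Nat.div_mul_le_self k 2)
  · rcases a.eq_zero_or_pos with rfl | ha
    · simp [show k ≠ 0 by lia]
    · rw [← pow_mul]
      exact Nat.pow_le_pow_right ha (by lia)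

theorem exists_pow_dvd_of_not_pseudoSquareFree {n : ℕ} (hn : ¬ PseudoSquareFree n) :
    ∃ p k : ℕ, 2 ≤ k ∧ p ^ k ∣ n ∧ Real.log (Real.log n) < (p : ℝ) ^ k := by
  have hloglog : Real.log (Real.log n) ≤ Real.log n := Real.log_le_self (Real.log_natCast_nonneg n)
  simp only [PseudoSquareFree, not_forall, not_and_or, not_not, not_le] at hn
  obtain ⟨p, hp, -, ⟨hlt, hdvd⟩ | ⟨hle, hlt⟩⟩ := hn
  · have hp1 : (1 : ℝ) ≤ p := Nat.one_le_cast.2 hp.one_le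
    exact ⟨p, 2, le_rfl, hdvd, hlt.trans_le (le_self_pow₀ hp1 two_ne_zero)⟩
  · refine ⟨p, n.factorization p, ?_, Nat.ordProj_dvd n p, hloglog.trans_lt hlt⟩
    have hpow : (p : ℝ) ^ 1 < (p : ℝ) ^ n.factorization p := by
      simpa only [pow_one] using (hle.trans hloglog).trans_lt hlt
    exact (pow_lt_pow_iff_right₀ (Nat.one_lt_cast.2 hp.one_lt)).1 hpow

theorem exists_sq_dvd_of_not_pseudoSquareFree {n : ℕ} (hn : ¬ PseudoSquareFree n) :
    ∃ m : ℕ, m ^ 2 ∣ n ∧ Real.log (Real.log n) < (m : ℝ) ^ 3 := by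
  obtain ⟨p, k, hk, hdvd, hlt⟩ := exists_pow_dvd_of_not_pseudoSquareFree hn
  obtain ⟨m, hm, hle⟩ := exists_sq_dvd_pow_and_pow_le_cube p hk
  exact ⟨m, hm.trans hdvd, hlt.trans_le (by exact_mod_cast hle)⟩

theorem hasNatDensity_compl_pseudoSquareFree : HasNatDensity {n | PseudoSquareFree n}ᶜ 0 := by
  refine hasNatDensity_zero_of_exists_sq_dvd fun K => ?_
  have hloglog : Tendsto (fun n : ℕ => Real.log (Real.log n)) atTop atTop :=
    Real.tendsto_log_atTop.comp (Real.tendsto_log_atTop.comp tendsto_natCast_atTop_atTop)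
  filter_upwards [hloglog.eventually_ge_atTop ((K : ℝ) ^ 3)] with n hKn hn
  obtain ⟨m, hdvd, hlt⟩ := exists_sq_dvd_of_not_pseudoSquareFree hn
  have hKm : K ^ 3 < m ^ 3 := by exact_mod_cast hKn.trans_lt hlt
  exact ⟨m, lt_of_pow_lt_pow_left' 3 hKm, hdvd⟩

/-- The set of pseudo-square-free positive integers has natural density `1`. -/
theorem pseudoSquareFree_density_one :
    Filter.Tendsto (fun N : ℕ =>
      (Nat.card {n : ℕ | n ∈ Finset.Icc 1 N ∧ PseudoSquareFree n} : ℝ) / N)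
      Filter.atTop (nhds 1) := by
  have hdensity : HasNatDensity {n | PseudoSquareFree n} 1 := by
    simpa only [compl_compl, sub_zero] using hasNatDensity_compl_pseudoSquareFree.compl
  refine hdensity.congr fun N => ?_
  rw [Nat.card_coe_set_eq, ← Finset.coe_Icc]
  rfl
end

section
/- Let N(x) denote the number of positive integers n with 3 ≤ n ≤ x for which there exists a prime p ≤ log log n such that the exact power p^e dividing n (i.e., e = v_p(n)) satisfies p^e > log n. Then N(x)/x → 0 as x → ∞; in other words, for almost all positive integers n, every prime p ≤ log log n dividing n satisfies p^{v_p(n)} ≤ log n. -/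
/-! Every power of `b` exceeding `T` is a multiple of the least one, so at most `x / T` of the
integers `1, …, x` are divisible by a power of `b` exceeding `T`. If `n > √x` then
`log n ≥ log x / 2`, so with `T = log x / 2` a union bound over the bases `b ≤ c log x`, together
with the at most `√x` integers `n ≤ √x`, gives at most `√x + (c log x + 1) * 2x / log x` exceptions
up to `x`. Since `log log n = o(log n)`, any `c > 0` is admissible once `x` is large. -/

open Asymptotics Filter Set Topology

/-- The set `A` of natural numbers has natural density zero, i.e. almost all positive integers lie
outside `A`. The integers `1, …, x` are counted; at `x = 0` the quotient is `0 / 0 = 0`. -/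
def HasDensityZero (A : Set ℕ) : Prop :=
  Tendsto (fun x : ℕ => ((Icc 1 x ∩ A).ncard : ℝ) / x) atTop (𝓝 0)

theorem HasDensityZero.tendsto_ncard_div {A : Set ℕ} (hA : HasDensityZero A) {S : ℕ → Set ℕ}
    (hS : ∀ x, S x ⊆ Icc 1 x ∩ A) :
    Tendsto (fun x : ℕ => ((S x).ncard : ℝ) / x) atTop (𝓝 0) := by
  refine squeeze_zero (fun x => by positivity) (fun x => ?_) hA
  gcongr
  exacts [(finite_Icc 1 x).inter_of_left A, hS x]

theorem hasDensityZero_of_forall_eventually_ncard_le {A : Set ℕ}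
    (h : ∀ ε > 0, ∀ᶠ x : ℕ in atTop, ((Icc 1 x ∩ A).ncard : ℝ) ≤ ε * x) : HasDensityZero A := by
  refine (isLittleO_iff.2 fun ε hε => ?_ :
    (fun x : ℕ => ((Icc 1 x ∩ A).ncard : ℝ)) =o[atTop] fun x : ℕ => (x : ℝ)).tendsto_div_nhds_zero
  simpa only [Real.norm_natCast] using h ε hε

theorem ncard_Icc_inter_dvd (d x : ℕ) : (Icc 1 x ∩ {n | d ∣ n}).ncard = x / d := by
  rw [← Nat.Ioc_filter_dvd_card_eq_div, ← ncard_coe_finset]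
  congr 1
  ext n
  simp [Nat.succ_le_iff]

theorem ncard_exists_pow_dvd_le (b x : ℕ) {T : ℝ} (hT : 0 < T) :
    ((Icc 1 x ∩ {n | ∃ k, b ^ k ∣ n ∧ T < (b : ℝ) ^ k}).ncard : ℝ) ≤ x / T := by
  classical
  by_cases h : ∃ k, T < (b : ℝ) ^ k
  · have hsub : Icc 1 x ∩ {n | ∃ k, b ^ k ∣ n ∧ T < (b : ℝ) ^ k} ⊆
        Icc 1 x ∩ {n | b ^ Nat.find h ∣ n} := fun n ⟨hn, k, hdvd, hk⟩ =>
      ⟨hn, (pow_dvd_pow b (Nat.find_min' h hk)).trans hdvd⟩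
    calc ((Icc 1 x ∩ {n | ∃ k, b ^ k ∣ n ∧ T < (b : ℝ) ^ k}).ncard : ℝ)
        ≤ (x / b ^ Nat.find h : ℕ) := by
          rw [← ncard_Icc_inter_dvd]
          exact Nat.cast_le.2 (ncard_le_ncard hsub ((finite_Icc 1 x).inter_of_left _))
      _ ≤ x / (b : ℝ) ^ Nat.find h := mod_cast Nat.cast_div_le
      _ ≤ x / T := by gcongr; exact (Nat.find_spec h).le
  · have hempty : {n | ∃ k, b ^ k ∣ n ∧ T < (b : ℝ) ^ k} = ∅ :=
      eq_empty_of_forall_notMem fun n ⟨k, _, hk⟩ => h ⟨k, hk⟩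
    rw [hempty, inter_empty, ncard_empty, Nat.cast_zero]
    positivity

theorem ncard_exists_mem_pow_dvd_le (B : Finset ℕ) (x : ℕ) {T : ℝ} (hT : 0 < T) :
    ((Icc 1 x ∩ {n | ∃ b ∈ B, ∃ k, b ^ k ∣ n ∧ T < (b : ℝ) ^ k}).ncard : ℝ) ≤
      B.card * (x / T) := by
  have hunion : Icc 1 x ∩ {n | ∃ b ∈ B, ∃ k, b ^ k ∣ n ∧ T < (b : ℝ) ^ k} =
      ⋃ b ∈ B, Icc 1 x ∩ {n | ∃ k, b ^ k ∣ n ∧ T < (b : ℝ) ^ k} := by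
    ext n
    simp only [mem_inter_iff, mem_ofPred_eq, mem_iUnion, exists_prop]
    tauto
  rw [hunion, ← nsmul_eq_mul]
  calc ((⋃ b ∈ B, Icc 1 x ∩ {n | ∃ k, b ^ k ∣ n ∧ T < (b : ℝ) ^ k}).ncard : ℝ)
      ≤ ∑ b ∈ B, ((Icc 1 x ∩ {n | ∃ k, b ^ k ∣ n ∧ T < (b : ℝ) ^ k}).ncard : ℝ) :=
        mod_cast B.set_ncard_biUnion_le _
    _ ≤ B.card • (x / T) :=
        Finset.sum_le_card_nsmul _ _ _ fun b _ => ncard_exists_pow_dvd_le b x hT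

theorem Icc_inter_exists_log_lt_pow_subset {f : ℕ → ℝ} {c : ℝ} (hc : 0 ≤ c) {x : ℕ}
    (hf : ∀ n : ℕ, √x < n → f n ≤ c * Real.log n) :
    Icc 1 x ∩ {n | ∃ b k : ℕ, b ≤ f n ∧ b ^ k ∣ n ∧ Real.log n < (b : ℝ) ^ k} ⊆
      Icc 1 ⌊√x⌋₊ ∪ (Icc 1 x ∩ {n | ∃ b ∈ Finset.range (⌊c * Real.log x⌋₊ + 1), ∃ k,
        b ^ k ∣ n ∧ Real.log x / 2 < (b : ℝ) ^ k}) := by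
  rintro n ⟨hn, b, k, hb, hdvd, hlt⟩
  have hxpos : (0 : ℝ) < x := mod_cast hn.1.trans hn.2
  rcases le_or_gt (n : ℝ) √x with hsmall | hlarge
  · exact .inl ⟨hn.1, Nat.le_floor hsmall⟩
  · have hhalf : Real.log x / 2 ≤ Real.log n := by
      rw [← Real.log_sqrt hxpos.le]
      exact Real.log_le_log (by positivity) hlarge.le
    have hbase : (b : ℝ) ≤ c * Real.log x := by
      refine (hb.trans (hf n hlarge)).trans ?_
      gcongr
      exacts [mod_cast hn.1, hn.2]
    exact .inr ⟨hn, b, Finset.mem_range_succ_iff.2 (Nat.le_floor hbase), k, hdvd,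
      hhalf.trans_lt hlt⟩

theorem ncard_exists_log_lt_pow_le {f : ℕ → ℝ} {c : ℝ} (hc : 0 ≤ c) {x : ℕ} (hx : 1 < x)
    (hf : ∀ n : ℕ, √x < n → f n ≤ c * Real.log n) :
    ((Icc 1 x ∩ {n | ∃ b k : ℕ, b ≤ f n ∧ b ^ k ∣ n ∧ Real.log n < (b : ℝ) ^ k}).ncard : ℝ) ≤
      √x + (c * Real.log x + 1) * (x / (Real.log x / 2)) := by
  have hlog : 0 < Real.log x := Real.log_pos (mod_cast hx)
  set B := Finset.range (⌊c * Real.log x⌋₊ + 1) with hB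
  set E := Icc 1 x ∩ {n | ∃ b ∈ B, ∃ k, b ^ k ∣ n ∧ Real.log x / 2 < (b : ℝ) ^ k}
  have hbases : (B.card : ℝ) ≤ c * Real.log x + 1 := by
    rw [hB, Finset.card_range, Nat.cast_add_one]
    gcongr
    exact Nat.floor_le (by positivity)
  calc _ ≤ ((Icc 1 ⌊√x⌋₊ ∪ E).ncard : ℝ) :=
        Nat.cast_le.2 <| ncard_le_ncard (Icc_inter_exists_log_lt_pow_subset hc hf) <|
          (finite_Icc _ _).union ((finite_Icc _ _).inter_of_left _)
    _ ≤ ⌊√x⌋₊ + (E.ncard : ℝ) := by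
        refine mod_cast (ncard_union_le _ _).trans_eq ?_
        rw [ncard_Icc_nat, Nat.add_sub_cancel]
    _ ≤ √x + (c * Real.log x + 1) * (x / (Real.log x / 2)) := by
        gcongr
        · exact Nat.floor_le (by positivity)
        · refine (ncard_exists_mem_pow_dvd_le B x (by positivity)).trans ?_
          gcongr

theorem count_large_smallPrimePower_tendsto_zero_general {f : ℕ → ℝ}
    (hf : f =o[atTop] fun n : ℕ => Real.log n) :
    HasDensityZero {n | ∃ b k : ℕ, b ≤ f n ∧ b ^ k ∣ n ∧ Real.log n < (b : ℝ) ^ k} := by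
  refine hasDensityZero_of_forall_eventually_ncard_le fun ε hε => ?_
  have hsqrt : Tendsto (fun x : ℕ => √(x : ℝ)) atTop atTop :=
    Real.tendsto_sqrt_atTop.comp tendsto_natCast_atTop_atTop
  have hlog : Tendsto (fun x : ℕ => Real.log x) atTop atTop :=
    Real.tendsto_log_atTop.comp tendsto_natCast_atTop_atTop
  obtain ⟨N, hN⟩ := eventually_atTop.1 (hf.bound (show 0 < ε / 6 by positivity))
  filter_upwards [eventually_gt_atTop 1, hsqrt.eventually_ge_atTop (N : ℝ),
    hsqrt.eventually_ge_atTop (3 / ε), hlog.eventually_ge_atTop (6 / ε)] with x hx hNx hsx hlx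
  have hlogx : 0 < Real.log x := lt_of_lt_of_le (by positivity) hlx
  have hfx (n : ℕ) (hn : √x < n) : f n ≤ ε / 6 * Real.log n := by
    have hbound := hN n (mod_cast (hNx.trans hn.le))
    rw [Real.norm_of_nonneg (Real.log_natCast_nonneg n)] at hbound
    exact (Real.le_norm_self _).trans hbound
  have hsqrtx : √x ≤ ε / 3 * x := by
    have := (div_le_iff₀ hε).1 hsx
    nlinarith [Real.mul_self_sqrt x.cast_nonneg, Real.sqrt_nonneg x]
  have hdiv : x / Real.log x ≤ ε / 6 * x := by
    have := (div_le_iff₀ hε).1 hlx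
    rw [div_le_iff₀ hlogx]
    nlinarith [(x.cast_nonneg : (0 : ℝ) ≤ x)]
  calc _ ≤ √x + (ε / 6 * Real.log x + 1) * (x / (Real.log x / 2)) :=
        ncard_exists_log_lt_pow_le (by positivity) hx hfx
    _ = √x + ε / 3 * x + 2 * (x / Real.log x) := by field_simp; ring
    _ ≤ ε * x := by linarith

theorem isLittleO_log_log_log_natCast :
    (fun n : ℕ => Real.log (Real.log n)) =o[atTop] fun n : ℕ => Real.log n :=
  Real.isLittleO_log_id_atTop.comp_tendsto
    (Real.tendsto_log_atTop.comp tendsto_natCast_atTop_atTop)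

/-- Let `N x` be the number of integers `n` with `3 ≤ n ≤ x` for which some prime
`p ≤ log log n` satisfies `p ^ (v_p n) > log n` (where `v_p n` is the `p`-adic valuation).
Then `N x / x → 0` as `x → ∞`: for almost all `n`, every prime `p ≤ log log n`
dividing `n` satisfies `p ^ (v_p n) ≤ log n`. -/
theorem count_large_smallPrimePower_tendsto_zero :
    Filter.Tendsto (fun x : ℕ =>
      (Nat.card {n : ℕ | n ∈ Finset.Icc 3 x ∧ ∃ p : ℕ, p.Prime ∧
          (p : ℝ) ≤ Real.log (Real.log n) ∧
          Real.log n < (p : ℝ) ^ (n.factorization p)} : ℝ) / x)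
      Filter.atTop (nhds 0) :=
  (count_large_smallPrimePower_tendsto_zero_general
    isLittleO_log_log_log_natCast).tendsto_ncard_div fun _ n ⟨hn, p, _, hp, hlt⟩ =>
      ⟨Icc_subset_Icc_left (by norm_num) (Finset.mem_Icc.1 hn),
        p, n.factorization p, hp, n.ordProj_dvd p, hlt⟩
end

section
/- The set of positive integers n that are both (2, log log n)-free and (log log n)-separable has natural density 1. -/
/-- A positive integer `n` is `(2,c)`-free if every prime `p` with `p² ∣ n` satisfies `p ≤ c`. -/
def TwoCFree (c : ℝ) (n : ℕ) : Prop :=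
  ∀ p : ℕ, p.Prime → p ^ 2 ∣ n → (p : ℝ) ≤ c

/-- A positive integer `n` is `c`-separable if for every prime `p > c` dividing `n`,
every prime `q`, and every `k ≥ 0`: `q ^ k ∣ n` and `q ^ k ≡ 1 (mod p)` imply `k = 0`. -/
def CSeparable (c : ℝ) (n : ℕ) : Prop :=
  ∀ p : ℕ, p.Prime → c < (p : ℝ) → p ∣ n →
    ∀ q : ℕ, q.Prime → ∀ k : ℕ, q ^ k ∣ n → q ^ k ≡ 1 [MOD p] → k = 0

/-! Let `y` be about `(log log N) / 2`. For all but `√N` of the integers `n ≤ N` we have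
`log log n ≥ y`, and if such an `n` violates one of the two conditions then either

* `s ^ 2 ∣ n` for some `s > y ^ (1 / 3)`: for a prime power `q ^ k ∣ n` with `k ≥ 2` and
  `q ^ k ≡ 1 [MOD p]`, `p > y`, take `s = q ^ ⌊k / 2⌋`, so that `s ^ 3 ≥ q ^ k > y`; or
* `p * q ∣ n` for primes `p > y` and `q ≡ 1 [MOD p]`.

There are `O(N / y ^ (1 / 3))` integers of the first kind. By the Brun–Titchmarsh inequality, which
comes from Selberg's sieve, the reciprocals of the primes `q ≤ N` with `q ≡ 1 [MOD p]` add up to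
`O((log log N) / p)`; and `∑ 1 / p ^ 2 = O(1 / (y log y))` over the primes `p > y`, by Chebyshev's
bound. So the integers of the second kind number `O(N (log log N) / (y log y)) = O(N / log y)`.
-/

section SelbergUpperBound

open Finset
open scoped ArithmeticFunction.Moebius

theorem sum_divisors_filter_dvd_moebius {l m : ℕ} (hm : Squarefree m) :
    ∑ d ∈ m.divisors with l ∣ d, μ d = if l = m then μ l else 0 := by
  by_cases hlm : l ∣ m
  · obtain ⟨k, rfl⟩ := hlm
    have hl : l ≠ 0 := left_ne_zero_of_mul hm.ne_zero
    have hcop : l.Coprime k := Nat.coprime_of_squarefree_mul hm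
    have hmultiples : {d ∈ (l * k).divisors | l ∣ d} = k.divisors.image (l * ·) := by
      ext d
      simp only [mem_filter, Nat.mem_divisors, mem_image]
      constructor
      · rintro ⟨⟨hd, -⟩, e, rfl⟩
        exact ⟨e, ⟨Nat.dvd_of_mul_dvd_mul_left (Nat.pos_of_ne_zero hl) hd,
          right_ne_zero_of_mul hm.ne_zero⟩, rfl⟩
      · rintro ⟨e, ⟨he, -⟩, rfl⟩
        exact ⟨⟨mul_dvd_mul_left l he, hm.ne_zero⟩, dvd_mul_right l e⟩
    calc ∑ d ∈ (l * k).divisors with l ∣ d, μ d = ∑ e ∈ k.divisors, μ l * μ e := by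
          rw [hmultiples, sum_image (by simpa using (mul_right_injective₀ hl).injOn)]
          refine sum_congr rfl fun e he ↦ ?_
          exact ArithmeticFunction.isMultiplicative_moebius.map_mul_of_coprime
            (hcop.coprime_dvd_right (Nat.dvd_of_mem_divisors he))
      _ = μ l * (1 : ArithmeticFunction ℤ) k := by
          rw [← mul_sum, ← ArithmeticFunction.coe_mul_zeta_apply,
            ArithmeticFunction.moebius_mul_coe_zeta]
      _ = if l = l * k then μ l else 0 := by
          simp [ArithmeticFunction.one_apply, hl]
  · rw [if_neg (by rintro rfl; exact hlm dvd_rfl), filter_false_of_mem, sum_empty]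
    exact fun d hd hld ↦ hlm (hld.trans (Nat.dvd_of_mem_divisors hd))

variable {s : BoundingSieve} {D : Finset ℕ}

theorem nu_le_selbergTerms {l : ℕ} (hl : l ∣ s.prodPrimes) : s.nu l ≤ s.selbergTerms l := by
  rw [s.selbergTerms_apply]
  refine le_mul_of_one_le_right (s.nu_pos_of_dvd_prodPrimes hl).le ?_
  refine Finset.prod_induction _ (1 ≤ ·) (fun _ _ ↦ one_le_mul_of_one_le_of_one_le) le_rfl ?_
  intro p hp
  have hpP : p ∣ s.prodPrimes := (Nat.dvd_of_mem_primeFactors hp).trans hl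
  have hp_prime := Nat.prime_of_mem_primeFactors hp
  exact (one_le_inv₀ (sub_pos.2 (s.nu_lt_one_of_prime p hp_prime hpP))).2
    (sub_le_self 1 (s.nu_pos_of_prime p hp_prime hpP).le)

/-- The Λ² weights that minimise the main term of Selberg's sieve among the sequences supported on
a divisor-closed set `D` of squarefree numbers and normalised at `1`. -/
noncomputable def selbergWeight (s : BoundingSieve) (D : Finset ℕ) (d : ℕ) : ℝ :=
  μ d * (s.nu d)⁻¹ * (∑ l ∈ D with d ∣ l, s.selbergTerms l) / ∑ l ∈ D, s.selbergTerms l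

theorem selbergWeight_eq_zero (hD : ∀ l ∈ D, ∀ d, d ∣ l → d ∈ D) {d : ℕ} (hd : d ∉ D) :
    selbergWeight s D d = 0 := by
  have : {l ∈ D | d ∣ l} = ∅ := filter_eq_empty_iff.2 fun l hl hdl ↦ hd (hD l hl d hdl)
  simp [selbergWeight, this]

theorem sum_selbergTerms_pos (hDP : D ⊆ s.prodPrimes.divisors) (hD : D.Nonempty) :
    0 < ∑ l ∈ D, s.selbergTerms l :=
  sum_pos (fun _ hl ↦ s.selbergTerms_pos (Nat.dvd_of_mem_divisors (hDP hl))) hD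

theorem selbergWeight_one (hDP : D ⊆ s.prodPrimes.divisors) (hD : D.Nonempty) :
    selbergWeight s D 1 = 1 := by
  simp [selbergWeight, s.nu_mult.map_one, (sum_selbergTerms_pos hDP hD).ne']

theorem eq_and_eq_of_mul_div_eq {d k k' l l' : ℕ} (hd : d ≠ 0) (hk : k ∣ d) (hk' : k' ∣ d)
    (hl : d ∣ l) (hl' : d ∣ l') (hcop : d.Coprime (l / d)) (hcop' : d.Coprime (l' / d))
    (h : k * (l / d) = k' * (l' / d)) : k = k' ∧ l = l' := by
  -- `k` is recovered from the product as its greatest common divisor with `d`.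
  obtain rfl : k = k' := calc
    k = d.gcd (k * (l / d)) := by rw [hcop.symm.gcd_mul_right_cancel_right, Nat.gcd_eq_right hk]
    _ = k' := by rw [h, hcop'.symm.gcd_mul_right_cancel_right, Nat.gcd_eq_right hk']
  have hdiv : l / d = l' / d :=
    Nat.eq_of_mul_eq_mul_left (Nat.pos_of_ne_zero (ne_zero_of_dvd_ne_zero hd hk)) h
  exact ⟨rfl, by rw [← Nat.div_mul_cancel hl, hdiv, Nat.div_mul_cancel hl']⟩

theorem coprime_div_of_dvd_prodPrimes {d l : ℕ} (hl : l ∣ s.prodPrimes) (hdl : d ∣ l) :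
    d.Coprime (l / d) :=
  Nat.coprime_of_squarefree_mul <|
    (Nat.mul_div_cancel' hdl).symm ▸ s.squarefree_of_dvd_prodPrimes hl

theorem inv_nu_mul_selbergTerms {d l : ℕ} (hl : l ∣ s.prodPrimes) (hdl : d ∣ l) :
    (s.nu d)⁻¹ * s.selbergTerms l = ∑ k ∈ d.divisors, s.selbergTerms (k * (l / d)) := by
  have hg := s.selbergTerms_isMultiplicative
  have hcop := coprime_div_of_dvd_prodPrimes hl hdl
  calc (s.nu d)⁻¹ * s.selbergTerms l
      = s.selbergTerms d * (s.nu d)⁻¹ * s.selbergTerms (l / d) := by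
        conv_lhs => rw [← Nat.mul_div_cancel' hdl, hg.map_mul_of_coprime hcop]
        ring
    _ = (∑ k ∈ d.divisors, s.selbergTerms k) * s.selbergTerms (l / d) := by
        rw [← s.sum_divisors_selbergTerms_eq_selbergTerms_mul_nu_inv (hdl.trans hl), ← sum_filter,
          Nat.divisors_filter_dvd_of_dvd s.prodPrimes_ne_zero (hdl.trans hl)]
    _ = ∑ k ∈ d.divisors, s.selbergTerms (k * (l / d)) := by
        rw [sum_mul]
        refine sum_congr rfl fun k hk ↦ (hg.map_mul_of_coprime ?_).symm
        exact hcop.coprime_dvd_left (Nat.dvd_of_mem_divisors hk)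

theorem inv_nu_mul_sum_selbergTerms_le (hDP : D ⊆ s.prodPrimes.divisors)
    (hD : ∀ l ∈ D, ∀ d, d ∣ l → d ∈ D) {d : ℕ} (hd : d ≠ 0) :
    (s.nu d)⁻¹ * ∑ l ∈ D with d ∣ l, s.selbergTerms l ≤ ∑ l ∈ D, s.selbergTerms l := by
  have hP {l} (hl : l ∈ D) : l ∣ s.prodPrimes := Nat.dvd_of_mem_divisors (hDP hl)
  have hinj : Set.InjOn (fun x : ℕ × ℕ ↦ x.1 * (x.2 / d))
      (d.divisors ×ˢ {l ∈ D | d ∣ l} : Finset (ℕ × ℕ)) := by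
    intro x hx y hy heq
    simp only [coe_product, Set.mem_prod, mem_coe, mem_filter, Nat.mem_divisors] at hx hy
    exact Prod.ext_iff.2 <| eq_and_eq_of_mul_div_eq hd hx.1.1 hy.1.1 hx.2.2 hy.2.2
      (coprime_div_of_dvd_prodPrimes (hP hx.2.1) hx.2.2)
      (coprime_div_of_dvd_prodPrimes (hP hy.2.1) hy.2.2) heq
  calc (s.nu d)⁻¹ * ∑ l ∈ D with d ∣ l, s.selbergTerms l
      = ∑ x ∈ d.divisors ×ˢ {l ∈ D | d ∣ l}, s.selbergTerms (x.1 * (x.2 / d)) := by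
        rw [sum_product_right, mul_sum]
        refine sum_congr rfl fun l hl ↦ ?_
        exact inv_nu_mul_selbergTerms (hP (mem_filter.1 hl).1) (mem_filter.1 hl).2
    _ = ∑ m ∈ (d.divisors ×ˢ {l ∈ D | d ∣ l}).image fun x ↦ x.1 * (x.2 / d),
          s.selbergTerms m := (sum_image hinj).symm
    _ ≤ ∑ l ∈ D, s.selbergTerms l := by
        refine sum_le_sum_of_subset_of_nonneg ?_ fun l hl _ ↦ (s.selbergTerms_pos (hP hl)).le
        simp only [image_subset_iff, mem_product, mem_filter, Nat.mem_divisors]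
        rintro ⟨k, l⟩ ⟨⟨hk, -⟩, hl, hdl⟩
        exact hD l hl _ ((mul_dvd_mul_right hk _).trans (Nat.mul_div_cancel' hdl).dvd)

theorem abs_selbergWeight_le_one (hDP : D ⊆ s.prodPrimes.divisors)
    (hD : ∀ l ∈ D, ∀ d, d ∣ l → d ∈ D) (d : ℕ) : |selbergWeight s D d| ≤ 1 := by
  by_cases hd : d ∈ D
  · have hdP : d ∣ s.prodPrimes := Nat.dvd_of_mem_divisors (hDP hd)
    have hS := sum_selbergTerms_pos hDP ⟨d, hd⟩
    have hμ : |(μ d : ℝ)| ≤ 1 := mod_cast ArithmeticFunction.abs_moebius_le_one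
    have hnonneg : 0 ≤ (s.nu d)⁻¹ * ∑ l ∈ D with d ∣ l, s.selbergTerms l :=
      mul_nonneg (inv_nonneg.2 (s.nu_pos_of_dvd_prodPrimes hdP).le) (sum_nonneg fun l hl ↦
        (s.selbergTerms_pos (Nat.dvd_of_mem_divisors (hDP (mem_filter.1 hl).1))).le)
    rw [selbergWeight, mul_assoc, abs_div, abs_mul, abs_of_nonneg hnonneg, abs_of_pos hS,
      div_le_one hS]
    exact (mul_le_of_le_one_left hnonneg hμ).trans (inv_nu_mul_sum_selbergTerms_le hDP hD
      (ne_zero_of_dvd_ne_zero s.prodPrimes_ne_zero hdP))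
  · simp [selbergWeight_eq_zero hD hd]

theorem sum_nu_mul_selbergWeight (hDP : D ⊆ s.prodPrimes.divisors) (l : ℕ) :
    ∑ d ∈ s.prodPrimes.divisors with l ∣ d, s.nu d * selbergWeight s D d =
      if l ∈ D then μ l * s.selbergTerms l / ∑ m ∈ D, s.selbergTerms m else 0 := by
  calc ∑ d ∈ s.prodPrimes.divisors with l ∣ d, s.nu d * selbergWeight s D d
      = (∑ d ∈ s.prodPrimes.divisors with l ∣ d, ∑ m ∈ D with d ∣ m,
          μ d * s.selbergTerms m) / ∑ m ∈ D, s.selbergTerms m := by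
        rw [sum_div]
        refine sum_congr rfl fun d hd ↦ ?_
        have hnu := s.nu_ne_zero (Nat.dvd_of_mem_divisors (mem_filter.1 hd).1)
        rw [selbergWeight, ← mul_sum]
        field_simp
    _ = (∑ m ∈ D, (∑ d ∈ m.divisors with l ∣ d, μ d : ℤ) * s.selbergTerms m) /
          ∑ m ∈ D, s.selbergTerms m := by
        congr 1
        simp_rw [Int.cast_sum, sum_mul]
        refine sum_comm' fun d m ↦ ?_
        simp only [mem_filter, Nat.mem_divisors]
        constructor
        · rintro ⟨⟨-, hld⟩, hm, hdm⟩
          exact ⟨⟨⟨hdm, (Nat.pos_of_mem_divisors (hDP hm)).ne'⟩, hld⟩, hm⟩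
        · rintro ⟨⟨⟨hdm, -⟩, hld⟩, hm⟩
          exact ⟨⟨⟨hdm.trans (Nat.dvd_of_mem_divisors (hDP hm)), s.prodPrimes_ne_zero⟩, hld⟩,
            hm, hdm⟩
    _ = (∑ m ∈ D, if l = m then μ l * s.selbergTerms l else 0) / ∑ m ∈ D, s.selbergTerms m := by
        congr 1
        refine sum_congr rfl fun m hm ↦ ?_
        rw [sum_divisors_filter_dvd_moebius
          (s.squarefree_of_dvd_prodPrimes (Nat.dvd_of_mem_divisors (hDP hm)))]
        split_ifs with h
        · rw [h]
        · simp
    _ = _ := by rw [sum_ite_eq, ite_div, zero_div]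

theorem mainSum_selbergWeight (hDP : D ⊆ s.prodPrimes.divisors) :
    s.mainSum (BoundingSieve.lambdaSquared (selbergWeight s D)) =
      (∑ l ∈ D, s.selbergTerms l)⁻¹ := by
  set S := ∑ l ∈ D, s.selbergTerms l with hS
  calc s.mainSum (BoundingSieve.lambdaSquared (selbergWeight s D))
      = ∑ l ∈ s.prodPrimes.divisors, (s.selbergTerms l)⁻¹ *
          (if l ∈ D then μ l * s.selbergTerms l / S else 0) ^ 2 := by
        simp_rw [s.mainSum_lambdaSquared_eq_sum_mul_sum_sq, ← sum_filter,
          sum_nu_mul_selbergWeight hDP, hS]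
    _ = ∑ l ∈ D, (s.selbergTerms l)⁻¹ * (μ l * s.selbergTerms l / S) ^ 2 := by
        rw [← sum_subset hDP fun l _ hl ↦ by simp [hl]]
        exact sum_congr rfl fun l hl ↦ by rw [if_pos hl]
    _ = ∑ l ∈ D, s.selbergTerms l / S ^ 2 := by
        refine sum_congr rfl fun l hl ↦ ?_
        have hlP := Nat.dvd_of_mem_divisors (hDP hl)
        have hμ : (μ l : ℝ) ^ 2 = 1 := mod_cast
          ArithmeticFunction.moebius_sq_eq_one_of_squarefree (s.squarefree_of_dvd_prodPrimes hlP)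
        rw [div_pow, mul_pow, hμ]
        field_simp [(s.selbergTerms_pos hlP).ne']
    _ = S⁻¹ := by rw [← sum_div, ← hS, sq, div_self_mul_self']

theorem abs_lambdaSquared_le {w : ℕ → ℝ} (hw0 : ∀ d ∉ D, w d = 0) (hw1 : ∀ d, |w d| ≤ 1)
    (d : ℕ) : |BoundingSieve.lambdaSquared w d| ≤
      ∑ d₁ ∈ D, ∑ d₂ ∈ D, if d = d₁.lcm d₂ then 1 else 0 := by
  have hterm (d₁ d₂ : ℕ) : |if d = d₁.lcm d₂ then w d₁ * w d₂ else 0| ≤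
      if d₁ ∈ D ∧ d₂ ∈ D then if d = d₁.lcm d₂ then (1 : ℝ) else 0 else 0 := by
    split_ifs with h hmem hmem
    · exact (abs_mul _ _).trans_le (mul_le_one₀ (hw1 d₁) (abs_nonneg _) (hw1 d₂))
    · rcases not_and_or.1 hmem with hd | hd <;> simp [hw0 _ hd]
    · exact abs_zero.le
    · exact abs_zero.le
  calc |BoundingSieve.lambdaSquared w d|
      ≤ ∑ x ∈ d.divisors ×ˢ d.divisors, |if d = x.1.lcm x.2 then w x.1 * w x.2 else 0| := by
        rw [BoundingSieve.lambdaSquared, ← sum_product']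
        exact abs_sum_le_sum_abs _ _
    _ ≤ ∑ x ∈ d.divisors ×ˢ d.divisors with x.1 ∈ D ∧ x.2 ∈ D,
          if d = x.1.lcm x.2 then (1 : ℝ) else 0 := by
        rw [sum_filter]
        exact sum_le_sum fun x _ ↦ hterm x.1 x.2
    _ ≤ ∑ x ∈ D ×ˢ D, if d = x.1.lcm x.2 then (1 : ℝ) else 0 := by
        refine sum_le_sum_of_subset_of_nonneg ?_ fun _ _ _ ↦ by positivity
        exact fun x hx ↦ mem_product.2 (mem_filter.1 hx).2
    _ = ∑ d₁ ∈ D, ∑ d₂ ∈ D, if d = d₁.lcm d₂ then 1 else 0 :=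
        sum_product' D D fun d₁ d₂ ↦ if d = d₁.lcm d₂ then (1 : ℝ) else 0

theorem errSum_selbergWeight_le (hDP : D ⊆ s.prodPrimes.divisors)
    (hD : ∀ l ∈ D, ∀ d, d ∣ l → d ∈ D) :
    s.errSum (BoundingSieve.lambdaSquared (selbergWeight s D)) ≤
      ∑ d₁ ∈ D, ∑ d₂ ∈ D, |s.rem (d₁.lcm d₂)| := by
  have hlcm {d₁ d₂} (h₁ : d₁ ∈ D) (h₂ : d₂ ∈ D) : d₁.lcm d₂ ∈ s.prodPrimes.divisors :=
    Nat.mem_divisors.2 ⟨Nat.lcm_dvd (Nat.dvd_of_mem_divisors (hDP h₁))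
      (Nat.dvd_of_mem_divisors (hDP h₂)), s.prodPrimes_ne_zero⟩
  calc s.errSum (BoundingSieve.lambdaSquared (selbergWeight s D))
      ≤ ∑ d ∈ s.prodPrimes.divisors,
          (∑ d₁ ∈ D, ∑ d₂ ∈ D, if d = d₁.lcm d₂ then 1 else 0) * |s.rem d| := by
        unfold BoundingSieve.errSum
        gcongr with d
        exact abs_lambdaSquared_le (fun _ ↦ selbergWeight_eq_zero hD)
          (abs_selbergWeight_le_one hDP hD) d
    _ = ∑ d₁ ∈ D, ∑ d₂ ∈ D, ∑ d ∈ s.prodPrimes.divisors,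
          if d = d₁.lcm d₂ then |s.rem d| else 0 := by
        simp_rw [sum_mul, ite_mul, one_mul, zero_mul]
        rw [sum_comm]
        exact sum_congr rfl fun _ _ ↦ sum_comm
    _ = ∑ d₁ ∈ D, ∑ d₂ ∈ D, |s.rem (d₁.lcm d₂)| :=
        sum_congr rfl fun d₁ h₁ ↦ sum_congr rfl fun d₂ h₂ ↦ by
          rw [sum_ite_eq', if_pos (hlcm h₁ h₂)]

/-- The fundamental theorem of Selberg's sieve. -/
theorem siftedSum_le_totalMass_div_add (hDP : D ⊆ s.prodPrimes.divisors)
    (hD : ∀ l ∈ D, ∀ d, d ∣ l → d ∈ D) (hne : D.Nonempty) :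
    s.siftedSum ≤ s.totalMass / ∑ l ∈ D, s.selbergTerms l +
      ∑ d₁ ∈ D, ∑ d₂ ∈ D, |s.rem (d₁.lcm d₂)| := by
  have hupper := BoundingSieve.upperMoebius_lambdaSquared _ (selbergWeight_one hDP hne)
  refine (s.siftedSum_le_mainSum_errSum_of_upperMoebius _ hupper).trans ?_
  rw [mainSum_selbergWeight hDP, ← div_eq_mul_inv]
  gcongr
  exact errSum_selbergWeight_le hDP hD

end SelbergUpperBound

section SquarefreeSums

open Finset

theorem sum_inv_le_sum_inv_mul_sum_inv {S A B : Finset ℕ}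
    (h : ∀ n ∈ S, ∃ a ∈ A, ∃ b ∈ B, a * b = n) :
    ∑ n ∈ S, (n : ℝ)⁻¹ ≤ (∑ a ∈ A, (a : ℝ)⁻¹) * ∑ b ∈ B, (b : ℝ)⁻¹ := by
  have hcover : S ⊆ (A ×ˢ B).image fun x ↦ x.1 * x.2 := fun n hn ↦ by
    obtain ⟨a, ha, b, hb, hab⟩ := h n hn
    exact mem_image.2 ⟨(a, b), mem_product.2 ⟨ha, hb⟩, hab⟩
  calc ∑ n ∈ S, (n : ℝ)⁻¹
      ≤ ∑ n ∈ (A ×ˢ B).image (fun x : ℕ × ℕ ↦ x.1 * x.2), (n : ℝ)⁻¹ :=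
        sum_le_sum_of_subset_of_nonneg hcover fun _ _ _ ↦ by positivity
    _ ≤ ∑ x ∈ A ×ˢ B, ((x.1 * x.2 : ℕ) : ℝ)⁻¹ :=
        sum_image_le_of_nonneg (f := fun n : ℕ ↦ (n : ℝ)⁻¹) fun _ _ ↦ by positivity
    _ = (∑ a ∈ A, (a : ℝ)⁻¹) * ∑ b ∈ B, (b : ℝ)⁻¹ := by
        simp_rw [sum_mul_sum, ← sum_product', Nat.cast_mul, mul_inv]

theorem sum_inv_le_two_mul_sum_inv_squarefree (z : ℕ) :
    ∑ n ∈ Icc 1 z, (n : ℝ)⁻¹ ≤ 2 * ∑ d ∈ Icc 1 z with Squarefree d, (d : ℝ)⁻¹ := by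
  have hsquares : ∑ c ∈ (Icc 1 z).image fun b : ℕ ↦ b ^ 2, (c : ℝ)⁻¹ ≤ 2 := calc
    ∑ c ∈ (Icc 1 z).image fun b : ℕ ↦ b ^ 2, (c : ℝ)⁻¹ ≤ ∑ b ∈ Icc 1 z, ((b ^ 2 : ℕ) : ℝ)⁻¹ :=
      sum_image_le_of_nonneg (f := fun n : ℕ ↦ (n : ℝ)⁻¹) fun _ _ ↦ by positivity
    _ = ∑ b ∈ Ioo 0 (z + 1), ((b : ℝ) ^ 2)⁻¹ := by
      simp_rw [Nat.cast_pow]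
      rfl
    _ ≤ 2 := by simpa using sum_Ioo_inv_sq_le (α := ℝ) 0 (z + 1)
  refine (sum_inv_le_sum_inv_mul_sum_inv fun n hn ↦ ?_).trans
    (mul_le_mul_of_nonneg_right hsquares (by positivity))
  rw [mem_Icc] at hn
  obtain ⟨a, b, rfl, ha⟩ := Nat.sq_mul_squarefree n
  have hb0 : b ≠ 0 := by rintro rfl; simp at hn
  have hbn : b ≤ b ^ 2 * a :=
    (Nat.le_self_pow two_ne_zero b).trans (Nat.le_mul_of_pos_right _ ha.ne_zero.bot_lt)
  have han : a ≤ b ^ 2 * a := Nat.le_mul_of_pos_left _ (pow_pos hb0.bot_lt 2)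
  exact ⟨b ^ 2, mem_image_of_mem _ (mem_Icc.2 ⟨hb0.bot_lt, hbn.trans hn.2⟩), a,
    mem_filter.2 ⟨mem_Icc.2 ⟨ha.ne_zero.bot_lt, han.trans hn.2⟩, ha⟩, rfl⟩

theorem sum_inv_squarefree_divisors_le {k : ℕ} (hk : k ≠ 0) :
    ∑ l ∈ k.divisors with Squarefree l, (l : ℝ)⁻¹ ≤ k / k.totient := by
  have htotient : (k.totient : ℝ) = k * ∏ p ∈ k.primeFactors, (1 - (p : ℝ)⁻¹) := by
    simpa using congrArg (Rat.cast : ℚ → ℝ) (Nat.totient_eq_mul_prod_factors k)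
  calc ∑ l ∈ k.divisors with Squarefree l, (l : ℝ)⁻¹
      = ∏ p ∈ k.primeFactors, (1 + (p : ℝ)⁻¹) := by
        rw [Nat.sum_divisors_filter_squarefree hk, prod_one_add]
        simp [Nat.factors_eq, prod_val]
    _ ≤ ∏ p ∈ k.primeFactors, (1 - (p : ℝ)⁻¹)⁻¹ := by
        refine prod_le_prod (fun _ _ ↦ by positivity) fun p hp ↦ ?_
        have hp1 : (1 : ℝ) < p := mod_cast (Nat.prime_of_mem_primeFactors hp).one_lt
        have hpinv : (p : ℝ)⁻¹ < 1 := inv_lt_one_of_one_lt₀ hp1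
        refine ((le_div_iff₀ (sub_pos.2 hpinv)).2 ?_).trans_eq (one_div _)
        nlinarith [sq_nonneg (p : ℝ)⁻¹]
    _ = k / k.totient := by
        rw [htotient, prod_inv_distrib, div_mul_cancel_left₀ (Nat.cast_ne_zero.2 hk)]

/-- The squarefree numbers in `[1, z]` coprime to `k`: the support of the sieve weights that detect
primes in a progression modulo `k`. -/
def squarefreeCoprime (k z : ℕ) : Finset ℕ := {d ∈ Icc 1 z | Squarefree d ∧ k.Coprime d}

theorem sum_inv_squarefree_le_mul_sum_inv_squarefreeCoprime {k : ℕ} (hk : k ≠ 0) (z : ℕ) :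
    ∑ d ∈ Icc 1 z with Squarefree d, (d : ℝ)⁻¹ ≤
      (∑ l ∈ k.divisors with Squarefree l, (l : ℝ)⁻¹) * ∑ d ∈ squarefreeCoprime k z, (d : ℝ)⁻¹ := by
  refine sum_inv_le_sum_inv_mul_sum_inv fun d hd ↦ ?_
  simp only [mem_filter, mem_Icc] at hd
  obtain ⟨⟨hd1, hdz⟩, hsq⟩ := hd
  have hmul : d.gcd k * (d / d.gcd k) = d := Nat.mul_div_cancel' (d.gcd_dvd_left k)
  have hcop_gcd : (d.gcd k).Coprime (d / d.gcd k) :=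
    Nat.coprime_of_squarefree_mul (hmul.symm ▸ hsq)
  have hcop_div : (k / d.gcd k).Coprime (d / d.gcd k) :=
    (Nat.coprime_div_gcd_div_gcd (Nat.gcd_pos_of_pos_left k hd1)).symm
  have hcop : k.Coprime (d / d.gcd k) := by
    simpa only [Nat.mul_div_cancel' (d.gcd_dvd_right k)] using hcop_gcd.mul_left hcop_div
  have hdvd : d / d.gcd k ∣ d := Nat.div_dvd_of_dvd (d.gcd_dvd_left k)
  refine ⟨d.gcd k, mem_filter.2 ⟨Nat.mem_divisors.2 ⟨d.gcd_dvd_right k, hk⟩,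
    hsq.squarefree_of_dvd (d.gcd_dvd_left k)⟩, d / d.gcd k, mem_filter.2 ⟨mem_Icc.2 ⟨?_, ?_⟩,
    hsq.squarefree_of_dvd hdvd, hcop⟩, hmul⟩
  · exact Nat.pos_of_dvd_of_pos hdvd hd1
  · exact (Nat.div_le_self _ _).trans hdz

theorem totient_mul_log_le_sum_inv_squarefreeCoprime {k : ℕ} (hk : k ≠ 0) (z : ℕ) :
    k.totient * Real.log (z + 1 : ℕ) ≤ 2 * k * ∑ d ∈ squarefreeCoprime k z, (d : ℝ)⁻¹ := by
  have hφ : (0 : ℝ) < k.totient := mod_cast Nat.totient_pos.2 hk.bot_lt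
  have hlog : Real.log (z + 1 : ℕ) ≤
      2 * ((k / k.totient) * ∑ d ∈ squarefreeCoprime k z, (d : ℝ)⁻¹) := calc
    Real.log (z + 1 : ℕ) ≤ ∑ n ∈ Icc 1 z, (n : ℝ)⁻¹ := by
      simpa [harmonic_eq_sum_Icc] using log_add_one_le_harmonic z
    _ ≤ 2 * ∑ d ∈ Icc 1 z with Squarefree d, (d : ℝ)⁻¹ := sum_inv_le_two_mul_sum_inv_squarefree z
    _ ≤ 2 * ((k / k.totient) * ∑ d ∈ squarefreeCoprime k z, (d : ℝ)⁻¹) := by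
      gcongr
      refine (sum_inv_squarefree_le_mul_sum_inv_squarefreeCoprime hk z).trans ?_
      gcongr
      exact sum_inv_squarefree_divisors_le hk
  exact (le_div_iff₀' hφ).1 (hlog.trans_eq (by ring))

end SquarefreeSums

section BrunTitchmarsh

open Finset

theorem abs_card_Ico_modEq_sub_le {r : ℕ} (hr : 0 < r) (X Y v : ℕ) :
    |(#{n ∈ Ico X (X + Y) | n ≡ v [MOD r]} : ℝ) - Y / r| ≤ 1 := by
  set s : ℚ := (X - v) / r with hs
  have hend : (((X + Y : ℕ) : ℚ) - v) / r = s + Y / r := by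
    rw [hs, Nat.cast_add, ← add_div]
    ring
  have hcard : (#{n ∈ Ico X (X + Y) | n ≡ v [MOD r]} : ℚ) = ⌈s + (Y / r : ℚ)⌉ - ⌈s⌉ := by
    have hmono : ⌈s⌉ ≤ ⌈s + (Y / r : ℚ)⌉ :=
      Int.ceil_le_ceil (le_add_of_nonneg_right (by positivity))
    have hceil := Nat.Ico_filter_modEq_card X (X + Y) hr v
    rw [hend, ← hs, max_eq_left (sub_nonneg.2 hmono)] at hceil
    exact_mod_cast hceil
  have habs : |(#{n ∈ Ico X (X + Y) | n ≡ v [MOD r]} : ℚ) - Y / r| ≤ 1 := by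
    rw [hcard, abs_le]
    constructor <;>
      linarith [Int.le_ceil s, Int.ceil_lt_add_one s, Int.le_ceil (s + (Y / r : ℚ)),
        Int.ceil_lt_add_one (s + (Y / r : ℚ))]
  simpa using (Rat.cast_le (K := ℝ)).2 habs

theorem abs_card_Ico_modEq_dvd_sub_le {k d : ℕ} (hk : 0 < k) (hd : 0 < d) (hkd : k.Coprime d)
    (X Y a : ℕ) :
    |(#{n ∈ Ico X (X + Y) | n ≡ a [MOD k] ∧ d ∣ n} : ℝ) - Y / (k * d)| ≤ 1 := by
  obtain ⟨v, hvk, hvd⟩ := Nat.chineseRemainder hkd a 0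
  have hiff (n : ℕ) : n ≡ a [MOD k] ∧ d ∣ n ↔ n ≡ v [MOD k * d] := by
    rw [← Nat.modEq_and_modEq_iff_modEq_mul hkd, ← Nat.modEq_zero_iff_dvd]
    exact ⟨fun h ↦ ⟨h.1.trans hvk.symm, h.2.trans hvd.symm⟩, fun h ↦ ⟨h.1.trans hvk, h.2.trans hvd⟩⟩
  simp_rw [hiff]
  exact_mod_cast abs_card_Ico_modEq_sub_le (Nat.mul_pos hk hd) X Y v

/-- The product of the primes up to `z` that do not divide `k`. -/
def coprimePrimorial (k z : ℕ) : ℕ := ∏ p ∈ z.primesLE with k.Coprime p, p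

theorem squarefree_coprimePrimorial (k z : ℕ) : Squarefree (coprimePrimorial k z) := by
  have hprime {p} (hp : p ∈ z.primesLE.filter k.Coprime) : p.Prime :=
    Nat.prime_of_mem_primesLE (mem_filter.1 hp).1
  refine squarefree_prod_of_pairwise_isCoprime (fun p hp q hq hpq ↦ ?_)
    fun p hp ↦ (hprime hp).squarefree
  exact Nat.coprime_iff_isRelPrime.1 ((Nat.coprime_primes (hprime hp) (hprime hq)).2 hpq)

theorem coprimePrimorial_coprime_of_prime {q z : ℕ} (hq : q.Prime) (hz : z < q) (k : ℕ) :
    (coprimePrimorial k z).Coprime q := by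
  refine Nat.Coprime.prod_left fun p hp ↦ ?_
  obtain ⟨hpz, hp⟩ := Nat.mem_primesLE.1 (mem_filter.1 hp).1
  exact (Nat.coprime_primes hp hq).2 (hpz.trans_lt hz).ne

theorem squarefreeCoprime_subset_divisors (k z : ℕ) :
    squarefreeCoprime k z ⊆ (coprimePrimorial k z).divisors := by
  intro d hd
  simp only [squarefreeCoprime, mem_filter, mem_Icc] at hd
  obtain ⟨⟨hd1, hdz⟩, hsq, hkd⟩ := hd
  refine Nat.mem_divisors.2 ⟨?_, (squarefree_coprimePrimorial k z).ne_zero⟩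
  rw [← Nat.prod_primeFactors_of_squarefree hsq]
  refine prod_dvd_prod_of_subset _ _ _ fun p hp ↦ ?_
  have hpd := Nat.dvd_of_mem_primeFactors hp
  exact mem_filter.2 ⟨Nat.mem_primesLE.2 ⟨(Nat.le_of_dvd hd1 hpd).trans hdz,
    Nat.prime_of_mem_primeFactors hp⟩, hkd.coprime_dvd_right hpd⟩

theorem mem_squarefreeCoprime_of_dvd {k z l d : ℕ} (hl : l ∈ squarefreeCoprime k z) (hd : d ∣ l) :
    d ∈ squarefreeCoprime k z := by
  simp only [squarefreeCoprime, mem_filter, mem_Icc] at hl ⊢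
  exact ⟨⟨Nat.pos_of_dvd_of_pos hd hl.1.1, (Nat.le_of_dvd hl.1.1 hd).trans hl.1.2⟩,
    hl.2.1.squarefree_of_dvd hd, hl.2.2.coprime_dvd_right hd⟩

theorem one_mem_squarefreeCoprime (k : ℕ) {z : ℕ} (hz : 1 ≤ z) : 1 ∈ squarefreeCoprime k z :=
  mem_filter.2 ⟨mem_Icc.2 ⟨le_rfl, hz⟩, squarefree_one, k.coprime_one_right⟩

theorem card_squarefreeCoprime_le (k z : ℕ) : #(squarefreeCoprime k z) ≤ z :=
  (card_filter_le _ _).trans_eq (Nat.card_Icc 1 z)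

/-- The sieve problem that removes the multiples of primes `p ≤ z`, `p ∤ k`, from the integers
`n ≡ a [MOD k]` in `[X, X + Y)`. -/
noncomputable def progressionSieve (X Y k a z : ℕ) : BoundingSieve where
  support := {n ∈ Ico X (X + Y) | n ≡ a [MOD k]}
  prodPrimes := coprimePrimorial k z
  prodPrimes_squarefree := squarefree_coprimePrimorial k z
  weights _ := 1
  weights_nonneg _ := zero_le_one
  totalMass := Y / k
  nu := (ArithmeticFunction.zeta : ArithmeticFunction ℝ).pdiv
    (ArithmeticFunction.id : ArithmeticFunction ℝ)
  nu_mult := by arith_mult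
  nu_pos_of_prime p hp _ := by
    simp [ArithmeticFunction.pdiv_apply, hp.pos, hp.ne_zero]
  nu_lt_one_of_prime p hp _ := by
    simpa [ArithmeticFunction.pdiv_apply, hp.ne_zero] using
      inv_lt_one_of_one_lt₀ (Nat.one_lt_cast.2 hp.one_lt)

theorem progressionSieve_nu {d : ℕ} (hd : d ≠ 0) (X Y k a z : ℕ) :
    (progressionSieve X Y k a z).nu d = (d : ℝ)⁻¹ := by
  simp [progressionSieve, ArithmeticFunction.pdiv_apply, hd]

theorem abs_progressionSieve_rem_le {k d : ℕ} (hk : 0 < k) (hd : 0 < d) (hkd : k.Coprime d)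
    (X Y a z : ℕ) : |(progressionSieve X Y k a z).rem d| ≤ 1 := by
  have hmult : (progressionSieve X Y k a z).multSum d =
      #{n ∈ Ico X (X + Y) | n ≡ a [MOD k] ∧ d ∣ n} := by
    simp [progressionSieve, filter_filter]
  rw [BoundingSieve.rem, hmult, progressionSieve_nu hd.ne']
  convert abs_card_Ico_modEq_dvd_sub_le hk hd hkd X Y a using 3
  simp only [progressionSieve]
  field_simp

theorem card_prime_modEq_le_siftedSum_add (X Y k a z : ℕ) :
    (#{q ∈ Ico X (X + Y) | q.Prime ∧ q ≡ a [MOD k]} : ℝ) ≤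
      (progressionSieve X Y k a z).siftedSum + z := by
  have hsplit : {q ∈ Ico X (X + Y) | q.Prime ∧ q ≡ a [MOD k]} ⊆
      {n ∈ Ico X (X + Y) | n ≡ a [MOD k] ∧ (coprimePrimorial k z).Coprime n} ∪ Icc 1 z := by
    intro q hq
    simp only [mem_filter, mem_union, mem_Icc] at hq ⊢
    rcases le_or_gt q z with hqz | hzq
    · exact Or.inr ⟨hq.2.1.one_le, hqz⟩
    · exact Or.inl ⟨hq.1, hq.2.2, coprimePrimorial_coprime_of_prime hq.2.1 hzq k⟩
  have hsifted : (progressionSieve X Y k a z).siftedSum =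
      #{n ∈ Ico X (X + Y) | n ≡ a [MOD k] ∧ (coprimePrimorial k z).Coprime n} := by
    rw [← filter_filter, ← sum_boole]
    rfl
  rw [hsifted]
  have hcard := (card_le_card hsplit).trans (card_union_le _ _)
  rw [Nat.card_Icc, Nat.add_sub_cancel] at hcard
  exact_mod_cast hcard

theorem progressionSieve_siftedSum_le {k z : ℕ} (hk : 0 < k) (hz : 1 ≤ z) (X Y a : ℕ) :
    (progressionSieve X Y k a z).siftedSum ≤
      Y / (k * ∑ d ∈ squarefreeCoprime k z, (d : ℝ)⁻¹) + z ^ 2 := by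
  set s := progressionSieve X Y k a z
  set D := squarefreeCoprime k z
  have hDP : D ⊆ s.prodPrimes.divisors := squarefreeCoprime_subset_divisors k z
  have hpos {d} (hd : d ∈ D) : 0 < d := Nat.pos_of_mem_divisors (hDP hd)
  have hcop {d} (hd : d ∈ D) : k.Coprime d := (mem_filter.1 hd).2.2
  have hmain : s.totalMass / ∑ l ∈ D, s.selbergTerms l ≤ Y / (k * ∑ d ∈ D, (d : ℝ)⁻¹) := by
    rw [← div_div]
    refine div_le_div_of_nonneg_left (div_nonneg Y.cast_nonneg k.cast_nonneg) ?_
      (sum_le_sum fun l hl ↦ ?_)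
    · exact sum_pos (fun _ hd ↦ inv_pos.2 (Nat.cast_pos.2 (hpos hd)))
        ⟨1, one_mem_squarefreeCoprime k hz⟩
    · rw [← progressionSieve_nu (hpos hl).ne' X Y k a z]
      exact nu_le_selbergTerms (Nat.dvd_of_mem_divisors (hDP hl))
  have herr : ∑ d₁ ∈ D, ∑ d₂ ∈ D, |s.rem (d₁.lcm d₂)| ≤ (z : ℝ) ^ 2 := calc
    ∑ d₁ ∈ D, ∑ d₂ ∈ D, |s.rem (d₁.lcm d₂)| ≤ ∑ _d₁ ∈ D, ∑ _d₂ ∈ D, (1 : ℝ) := by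
      refine sum_le_sum fun d₁ h₁ ↦ sum_le_sum fun d₂ h₂ ↦ ?_
      refine abs_progressionSieve_rem_le hk (Nat.lcm_pos (hpos h₁) (hpos h₂)) ?_ X Y a z
      exact ((hcop h₁).mul_right (hcop h₂)).coprime_dvd_right (Nat.lcm_dvd_mul d₁ d₂)
    _ = (#D : ℝ) ^ 2 := by simp [sq]
    _ ≤ (z : ℝ) ^ 2 := by
      gcongr
      exact card_squarefreeCoprime_le k z
  exact (siftedSum_le_totalMass_div_add hDP (fun _ hl _ ↦ mem_squarefreeCoprime_of_dvd hl)
    ⟨1, one_mem_squarefreeCoprime k hz⟩).trans (add_le_add hmain herr)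

theorem card_prime_modEq_le_add_sq {k z : ℕ} (hk : 0 < k) (hz : 1 ≤ z) (X Y a : ℕ) :
    (#{q ∈ Ico X (X + Y) | q.Prime ∧ q ≡ a [MOD k]} : ℝ) ≤
      2 * Y / (k.totient * Real.log (z + 1 : ℕ)) + 2 * z ^ 2 := by
  have : (0 : ℝ) < k.totient := mod_cast Nat.totient_pos.2 hk
  have hlog : 0 < Real.log (z + 1 : ℕ) := Real.log_pos (mod_cast Nat.lt_add_of_pos_left hz)
  have hz' : (1 : ℝ) ≤ z := mod_cast hz
  have hmain : (Y : ℝ) / (k * ∑ d ∈ squarefreeCoprime k z, (d : ℝ)⁻¹) ≤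
      2 * Y / (k.totient * Real.log (z + 1 : ℕ)) := by
    rw [← mul_div_mul_left _ _ (two_ne_zero' ℝ), ← mul_assoc]
    exact div_le_div_of_nonneg_left (by positivity) (by positivity)
      (totient_mul_log_le_sum_inv_squarefreeCoprime hk.ne' z)
  calc (#{q ∈ Ico X (X + Y) | q.Prime ∧ q ≡ a [MOD k]} : ℝ)
      ≤ Y / (k * ∑ d ∈ squarefreeCoprime k z, (d : ℝ)⁻¹) + z ^ 2 + z :=
        (card_prime_modEq_le_siftedSum_add X Y k a z).trans <|
          add_le_add_left (progressionSieve_siftedSum_le hk hz X Y a) _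
    _ ≤ 2 * Y / (k.totient * Real.log (z + 1 : ℕ)) + z ^ 2 + z ^ 2 := by
        gcongr
        exact le_self_pow₀ hz' two_ne_zero
    _ = _ := by ring

/-- The Brun–Titchmarsh inequality, with a weaker constant than the optimal one. -/
theorem card_prime_modEq_le {k Y : ℕ} (hk : 0 < k) (hkY : k < Y) (X a : ℕ) :
    (#{q ∈ Ico X (X + Y) | q.Prime ∧ q ≡ a [MOD k]} : ℝ) ≤
      12 * Y / (k.totient * Real.log (Y / k)) := by
  set u : ℝ := Y / k with hu
  have hu1 : 1 < u := (one_lt_div (by positivity)).2 (mod_cast hkY)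
  set z := ⌊√√u⌋₊
  have : (0 : ℝ) < k.totient := mod_cast Nat.totient_pos.2 hk
  have hlogu : 0 < Real.log u := Real.log_pos hu1
  have hz1 : 1 ≤ z := Nat.le_floor (by simp [hu1.le])
  have hlogz : Real.log u / 4 ≤ Real.log (z + 1 : ℕ) := calc
    Real.log u / 4 = Real.log √√u := by
      rw [Real.log_sqrt (by positivity), Real.log_sqrt (by positivity)]
      ring
    _ ≤ Real.log (z + 1 : ℕ) := by
      gcongr
      exact_mod_cast (Nat.lt_floor_add_one _).le
  have hsq : (z : ℝ) ^ 2 ≤ √u :=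
    (Real.le_sqrt (by positivity) (by positivity)).1 (Nat.floor_le (by positivity))
  have hlog_le : Real.log u ≤ 2 * √u := by
    rw [Real.sqrt_eq_rpow]
    linarith [Real.log_le_rpow_div (by positivity : 0 ≤ u) one_half_pos]
  have herr : 2 * (z : ℝ) ^ 2 ≤ 4 * Y / (k.totient * Real.log u) := calc
    2 * (z : ℝ) ^ 2 ≤ 2 * √u := by gcongr
    _ ≤ 4 * u / Real.log u := by
      rw [le_div_iff₀ hlogu]
      nlinarith [Real.mul_self_sqrt (by positivity : 0 ≤ u), Real.sqrt_nonneg u]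
    _ = 4 * Y / (k * Real.log u) := by rw [hu]; field_simp
    _ ≤ 4 * Y / (k.totient * Real.log u) := by
      gcongr
      exact Nat.totient_le k
  calc (#{q ∈ Ico X (X + Y) | q.Prime ∧ q ≡ a [MOD k]} : ℝ)
      ≤ 2 * Y / (k.totient * Real.log (z + 1 : ℕ)) + 2 * z ^ 2 :=
        card_prime_modEq_le_add_sq hk hz1 X Y a
    _ ≤ 2 * Y / (k.totient * (Real.log u / 4)) + 4 * Y / (k.totient * Real.log u) := by gcongr
    _ = 12 * Y / (k.totient * Real.log u) := by ring

end BrunTitchmarsh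

section ReciprocalsOfPrimes

open Finset

theorem sum_inv_prime_modEq_Ico_two_mul_le {k Y : ℕ} (hk : 0 < k) (hkY : k < Y) (a : ℕ) :
    ∑ q ∈ Ico Y (2 * Y) with q.Prime ∧ q ≡ a [MOD k], (q : ℝ)⁻¹ ≤
      12 / (k.totient * Real.log (Y / k)) := by
  have hY : (0 : ℝ) < Y := mod_cast hk.trans hkY
  calc ∑ q ∈ Ico Y (2 * Y) with q.Prime ∧ q ≡ a [MOD k], (q : ℝ)⁻¹
      ≤ ∑ _q ∈ Ico Y (2 * Y) with _q.Prime ∧ _q ≡ a [MOD k], (Y : ℝ)⁻¹ := by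
        refine sum_le_sum fun q hq ↦ inv_anti₀ hY ?_
        exact_mod_cast (mem_Ico.1 (mem_filter.1 hq).1).1
    _ = #{q ∈ Ico Y (Y + Y) | q.Prime ∧ q ≡ a [MOD k]} / Y := by
        rw [sum_const, nsmul_eq_mul, two_mul, div_eq_mul_inv]
    _ ≤ 12 * Y / (k.totient * Real.log (Y / k)) / Y := by
        gcongr
        exact card_prime_modEq_le hk hkY Y a
    _ = 12 / (k.totient * Real.log (Y / k)) := by field_simp

theorem sum_inv_prime_modEq_dyadic_le {k : ℕ} (hk : 0 < k) (a K : ℕ) :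
    ∑ q ∈ Ico (k * 2) (k * 2 ^ (K + 1)) with q.Prime ∧ q ≡ a [MOD k], (q : ℝ)⁻¹ ≤
      12 / (k.totient * Real.log 2) * harmonic K := by
  induction K with
  | zero => simp
  | succ K ih =>
    set Y := k * 2 ^ (K + 1) with hY
    have hlog : Real.log (Y / k) = (K + 1) * Real.log 2 := by
      rw [hY, Nat.cast_mul, mul_div_cancel_left₀ _ (by positivity)]
      push_cast
      rw [Real.log_pow]
      push_cast
      rfl
    have hblock := sum_inv_prime_modEq_Ico_two_mul_le hk
      (lt_mul_of_one_lt_right hk (Nat.one_lt_two_pow K.succ_ne_zero)) a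
    rw [← hY, hlog] at hblock
    have hend : k * 2 ^ (K + 1 + 1) = 2 * Y := by rw [hY]; ring
    have hkY : k * 2 ≤ Y := Nat.mul_le_mul_left k (Nat.le_self_pow K.succ_ne_zero 2)
    rw [sum_filter] at ih hblock ⊢
    rw [hend, ← sum_Ico_consecutive _ hkY (Nat.le_mul_of_pos_left Y two_pos), harmonic_succ]
    refine (add_le_add ih hblock).trans_eq ?_
    push_cast
    field_simp

theorem eq_succ_of_modEq_one_of_lt {k q : ℕ} (hq1 : 1 < q) (hq : q ≡ 1 [MOD k])
    (hlt : q < k * 2) : q = k + 1 := by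
  obtain ⟨m, hm⟩ := (Nat.modEq_iff_dvd' hq1.le).1 hq.symm
  have hm1 : m = 1 := by nlinarith [Nat.sub_add_cancel hq1.le]
  subst hm1
  omega

theorem sum_inv_prime_modEq_one_le {k : ℕ} (hk : 0 < k) (N : ℕ) :
    ∑ q ∈ Icc 1 N with q.Prime ∧ q ≡ 1 [MOD k], (q : ℝ)⁻¹ ≤
      (1 + 12 / Real.log 2 * harmonic (Nat.log 2 N)) / k.totient := by
  have : (0 : ℝ) < k.totient := mod_cast Nat.totient_pos.2 hk
  set K := Nat.log 2 N
  set T := {q ∈ Ico (k * 2) (k * 2 ^ (K + 1)) | q.Prime ∧ q ≡ 1 [MOD k]}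
  have hsub : {q ∈ Icc 1 N | q.Prime ∧ q ≡ 1 [MOD k]} ⊆ {k + 1} ∪ T := by
    intro q hq
    simp only [T, mem_filter, mem_union, mem_singleton, mem_Icc, mem_Ico] at hq ⊢
    refine (lt_or_ge q (k * 2)).imp (eq_succ_of_modEq_one_of_lt hq.2.1.one_lt hq.2.2) fun h ↦ ?_
    refine ⟨⟨h, ?_⟩, hq.2⟩
    exact (hq.1.2.trans_lt (Nat.lt_pow_succ_log_self one_lt_two N)).trans_le
      (Nat.le_mul_of_pos_left _ hk)
  calc ∑ q ∈ Icc 1 N with q.Prime ∧ q ≡ 1 [MOD k], (q : ℝ)⁻¹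
      ≤ ∑ q ∈ {k + 1} ∪ T, (q : ℝ)⁻¹ :=
        sum_le_sum_of_subset_of_nonneg hsub fun _ _ _ ↦ by positivity
    _ ≤ ((k + 1 : ℕ) : ℝ)⁻¹ + ∑ q ∈ T, (q : ℝ)⁻¹ := by
        rw [← sum_singleton (fun q : ℕ ↦ (q : ℝ)⁻¹) (k + 1), ← sum_union_inter]
        exact le_add_of_nonneg_right (sum_nonneg fun _ _ ↦ by positivity)
    _ ≤ (k.totient : ℝ)⁻¹ + 12 / (k.totient * Real.log 2) * harmonic K := by
        gcongr
        · exact_mod_cast (Nat.totient_le k).trans k.le_succ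
        · exact sum_inv_prime_modEq_dyadic_le hk 1 K
    _ = (1 + 12 / Real.log 2 * harmonic K) / k.totient := by field_simp

theorem harmonic_log_two_le {N : ℕ} (hN : 2 ≤ N) :
    (harmonic (Nat.log 2 N) : ℝ) ≤ Real.log (Real.log N) + (1 + Real.log 2) := by
  have hlogN : 0 < Real.log N := Real.log_pos (mod_cast hN)
  have hK : (Nat.log 2 N : ℝ) ≤ 2 * Real.log N := by
    refine (Real.natLog_le_logb N 2).trans ?_
    rw [Nat.cast_ofNat, Real.logb, div_le_iff₀ (Real.log_pos one_lt_two)]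
    nlinarith [Real.log_two_gt_d9]
  calc (harmonic (Nat.log 2 N) : ℝ) ≤ 1 + Real.log (Nat.log 2 N) := harmonic_le_one_add_log _
    _ ≤ 1 + Real.log (2 * Real.log N) := by
        gcongr
        exact_mod_cast Nat.log_pos one_lt_two hN
    _ = Real.log (Real.log N) + (1 + Real.log 2) := by
        rw [Real.log_mul two_ne_zero hlogN.ne']
        ring

theorem sum_inv_prime_modEq_one_le_log_log {k N : ℕ} (hk : 0 < k) (hN : 2 ≤ N) :
    ∑ q ∈ Icc 1 N with q.Prime ∧ q ≡ 1 [MOD k], (q : ℝ)⁻¹ ≤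
      18 * (Real.log (Real.log N) + 2) / k.totient := by
  refine (sum_inv_prime_modEq_one_le hk N).trans ?_
  gcongr
  have h12 : 12 / Real.log 2 ≤ 18 := by
    rw [div_le_iff₀ (Real.log_pos one_lt_two)]
    linarith [Real.log_two_gt_d9]
  have hharm : (0 : ℝ) ≤ harmonic (Nat.log 2 N) := by
    simp only [harmonic]
    positivity
  nlinarith [harmonic_log_two_le hN, Real.log_two_lt_d9]

end ReciprocalsOfPrimes

section PrimeSquareSums

open Finset

/-- Abel summation against `n ↦ 1 / n ^ 2`, in telescoped form. -/
theorem sum_Ioc_div_sq_le_sum_div_sq_add {c : ℕ → ℝ} {A : ℝ} (hc : ∀ n, 0 ≤ c n)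
    (hA : ∀ n : ℕ, ∑ i ∈ Ioc 0 n, c i ≤ A * n) {m n : ℕ} (hm : 0 < m) (hmn : m ≤ n) :
    ∑ i ∈ Ioc m n, c i / (i : ℝ) ^ 2 ≤
      (∑ i ∈ Ioc 0 n, c i) / (n : ℝ) ^ 2 + 2 * A * ((m : ℝ)⁻¹ - (n : ℝ)⁻¹) := by
  induction n, hmn using Nat.le_induction with
  | base => simpa using div_nonneg (sum_nonneg fun i _ ↦ hc i) (sq_nonneg (m : ℝ))
  | succ n hmn ih =>
    have hn : (0 : ℝ) < n := mod_cast hm.trans_le hmn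
    have hA0 : 0 ≤ A := by simpa using (hc 1).trans (by simpa using hA 1)
    have hweight : 0 ≤ ((n : ℝ) ^ 2)⁻¹ - (((n : ℝ) + 1) ^ 2)⁻¹ :=
      sub_nonneg.2 (by gcongr; linarith)
    have htel : (∑ i ∈ Ioc 0 n, c i) * (((n : ℝ) ^ 2)⁻¹ - (((n : ℝ) + 1) ^ 2)⁻¹) ≤
        2 * A * ((n : ℝ)⁻¹ - ((n : ℝ) + 1)⁻¹) := calc
      _ ≤ A * n * (((n : ℝ) ^ 2)⁻¹ - (((n : ℝ) + 1) ^ 2)⁻¹) := by gcongr; exact hA n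
      _ = 2 * A * ((n : ℝ)⁻¹ - ((n : ℝ) + 1)⁻¹) - A / (n * ((n : ℝ) + 1) ^ 2) := by
        field_simp
        ring
      _ ≤ _ := sub_le_self _ (by positivity)
    rw [sum_Ioc_succ_top hmn, sum_Ioc_succ_top n.zero_le]
    push_cast
    simp only [div_eq_mul_inv] at ih ⊢
    linarith

theorem sum_Ioc_div_sq_le {c : ℕ → ℝ} {A : ℝ} (hc : ∀ n, 0 ≤ c n)
    (hA : ∀ n : ℕ, ∑ i ∈ Ioc 0 n, c i ≤ A * n) {m : ℕ} (hm : 0 < m) (n : ℕ) :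
    ∑ i ∈ Ioc m n, c i / (i : ℝ) ^ 2 ≤ 2 * A / m := by
  have hA0 : 0 ≤ A := by simpa using (hc 1).trans (by simpa using hA 1)
  rcases le_total n m with hnm | hmn
  · rw [Ioc_eq_empty_of_le hnm, sum_empty]
    positivity
  have hn : (0 : ℝ) < n := mod_cast hm.trans_le hmn
  have hlast : (∑ i ∈ Ioc 0 n, c i) / (n : ℝ) ^ 2 ≤ A / n := by
    rw [div_le_div_iff₀ (by positivity) hn, sq, ← mul_assoc]
    exact mul_le_mul_of_nonneg_right (hA n) hn.le
  calc ∑ i ∈ Ioc m n, c i / (i : ℝ) ^ 2 ≤ A / n + 2 * A * ((m : ℝ)⁻¹ - (n : ℝ)⁻¹) :=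
        (sum_Ioc_div_sq_le_sum_div_sq_add hc hA hm hmn).trans (by gcongr)
    _ = 2 * A / m - A / n := by ring
    _ ≤ 2 * A / m := sub_le_self _ (by positivity)

theorem sum_prime_log_div_sq_le {m : ℕ} (hm : 0 < m) (n : ℕ) :
    ∑ p ∈ Ioc m n with p.Prime, Real.log p / (p : ℝ) ^ 2 ≤ 2 * Real.log 4 / m := by
  have htheta (n : ℕ) :
      ∑ i ∈ Ioc 0 n, (if i.Prime then Real.log i else 0) ≤ Real.log 4 * n := by
    simpa [Chebyshev.theta, sum_filter] using Chebyshev.theta_le_log4_mul_x n.cast_nonneg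
  have hnonneg (n : ℕ) : 0 ≤ if n.Prime then Real.log n else 0 := by positivity
  simpa [sum_filter, ite_div] using sum_Ioc_div_sq_le hnonneg htheta hm n

theorem sum_prime_inv_sq_le {m : ℕ} (hm : 2 ≤ m) (n : ℕ) :
    ∑ p ∈ Ioc m n with p.Prime, ((p : ℝ) ^ 2)⁻¹ ≤ 2 * Real.log 4 / (m * Real.log m) := by
  have hlog : 0 < Real.log m := Real.log_pos (mod_cast hm)
  rw [← div_div, le_div_iff₀ hlog, sum_mul]
  refine (sum_le_sum fun p hp ↦ ?_).trans (sum_prime_log_div_sq_le (two_pos.trans_le hm) n)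
  rw [div_eq_inv_mul]
  gcongr
  exact (mem_Ioc.1 (mem_filter.1 hp).1).1.le

end PrimeSquareSums

section ExceptionalIntegers

open Finset

theorem card_exists_dvd_le {ι : Type*} (s : Finset ι) (m : ι → ℕ) (N : ℕ) :
    (#{n ∈ Icc 1 N | ∃ i ∈ s, m i ∣ n} : ℝ) ≤ N * ∑ i ∈ s, (m i : ℝ)⁻¹ := by
  classical
  have hunion : {n ∈ Icc 1 N | ∃ i ∈ s, m i ∣ n} = s.biUnion fun i ↦ {n ∈ Ioc 0 N | m i ∣ n} := by
    ext n
    simp only [mem_filter, mem_biUnion, mem_Icc, mem_Ioc]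
    grind
  rw [hunion, mul_sum]
  calc (#(s.biUnion fun i ↦ {n ∈ Ioc 0 N | m i ∣ n}) : ℝ)
      ≤ ∑ i ∈ s, (#{n ∈ Ioc 0 N | m i ∣ n} : ℝ) := mod_cast card_biUnion_le
    _ ≤ ∑ i ∈ s, (N : ℝ) * (m i : ℝ)⁻¹ := sum_le_sum fun i _ ↦ by
        rw [Nat.Ioc_filter_dvd_card_eq_div]
        exact Nat.cast_div_le

theorem card_exists_sq_dvd_le {S : ℝ} (hS : 0 < S) (N : ℕ) :
    (#{n ∈ Icc 1 N | ∃ s ∈ Ioc ⌊S⌋₊ N, s ^ 2 ∣ n} : ℝ) ≤ N * (2 / S) := by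
  refine (card_exists_dvd_le (Ioc ⌊S⌋₊ N) (· ^ 2) N).trans ?_
  gcongr
  calc ∑ s ∈ Ioc ⌊S⌋₊ N, ((s ^ 2 : ℕ) : ℝ)⁻¹ = ∑ s ∈ Ioo ⌊S⌋₊ (N + 1), ((s : ℝ) ^ 2)⁻¹ := by
        rw [Ioo_add_one_right_eq_Ioc]
        push_cast
        rfl
    _ ≤ 2 / (⌊S⌋₊ + 1) := sum_Ioo_inv_sq_le _ _
    _ ≤ 2 / S := by
        gcongr
        exact (Nat.lt_floor_add_one S).le

/-- The pairs `⟨p, q⟩` of primes at most `N` with `Y < p` and `q ≡ 1 [MOD p]`. Two such primes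
cannot both divide a `Y`-separable integer. -/
def linkedPrimePairs (Y N : ℕ) : Finset (Σ _ : ℕ, ℕ) :=
  {p ∈ Ioc Y N | p.Prime}.sigma fun p ↦ {q ∈ Icc 1 N | q.Prime ∧ q ≡ 1 [MOD p]}

theorem sum_linkedPrimePairs_inv_mul_le {Y N : ℕ} (hY : 2 ≤ Y) (hN : 1 ≤ Real.log N) :
    ∑ x ∈ linkedPrimePairs Y N, ((x.1 * x.2 : ℕ) : ℝ)⁻¹ ≤
      72 * Real.log 4 * (Real.log (Real.log N) + 2) / (Y * Real.log Y) := by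
  have hL : 0 ≤ Real.log (Real.log N) := Real.log_nonneg hN
  have hN2 : 2 ≤ N := by
    by_contra! h
    interval_cases N <;> norm_num at hN
  calc ∑ x ∈ linkedPrimePairs Y N, ((x.1 * x.2 : ℕ) : ℝ)⁻¹
      = ∑ p ∈ Ioc Y N with p.Prime,
          (p : ℝ)⁻¹ * ∑ q ∈ Icc 1 N with q.Prime ∧ q ≡ 1 [MOD p], (q : ℝ)⁻¹ := by
        rw [linkedPrimePairs, sum_sigma]
        simp only [Nat.cast_mul, mul_inv, mul_sum]
    _ ≤ ∑ p ∈ Ioc Y N with p.Prime,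
          36 * (Real.log (Real.log N) + 2) * ((p : ℝ) ^ 2)⁻¹ := by
        refine sum_le_sum fun p hp ↦ ?_
        have hp := (mem_filter.1 hp).2
        have hp2 : (2 : ℝ) ≤ p := mod_cast hp.two_le
        have hφ : (p : ℝ) / 2 ≤ p.totient := by
          rw [Nat.totient_prime hp, Nat.cast_pred hp.pos]
          linarith
        calc (p : ℝ)⁻¹ * ∑ q ∈ Icc 1 N with q.Prime ∧ q ≡ 1 [MOD p], (q : ℝ)⁻¹
            ≤ (p : ℝ)⁻¹ * (18 * (Real.log (Real.log N) + 2) / (p / 2)) := by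
              gcongr
              refine (sum_inv_prime_modEq_one_le_log_log hp.pos hN2).trans ?_
              gcongr
          _ = 36 * (Real.log (Real.log N) + 2) * ((p : ℝ) ^ 2)⁻¹ := by
              field_simp
              ring
    _ ≤ 36 * (Real.log (Real.log N) + 2) * (2 * Real.log 4 / (Y * Real.log Y)) := by
        rw [← mul_sum]
        gcongr
        exact sum_prime_inv_sq_le hY N
    _ = _ := by ring

end ExceptionalIntegers

section Covering

open Finset

theorem lt_of_modEq_one {m p : ℕ} (hm : 1 < m) (h : m ≡ 1 [MOD p]) : p < m := by
  have hle := Nat.le_of_dvd (Nat.sub_pos_of_lt hm) ((Nat.modEq_iff_dvd' hm.le).1 h.symm)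
  omega

theorem exists_sq_dvd_of_not_twoCFree {c S : ℝ} (hS : S ^ 3 ≤ c) {n : ℕ} (h : ¬TwoCFree c n) :
    ∃ s : ℕ, S < s ∧ s ^ 2 ∣ n := by
  simp only [TwoCFree, not_forall, not_le] at h
  obtain ⟨p, _, hpn, hcp⟩ := h
  refine ⟨p, lt_of_pow_lt_pow_left₀ 3 p.cast_nonneg ((hS.trans_lt hcp).trans_le ?_), hpn⟩
  exact_mod_cast Nat.le_self_pow three_ne_zero p

theorem exists_sq_dvd_of_pow_dvd {c S : ℝ} (hS : S ^ 3 ≤ c) {n q k : ℕ} (hq : 0 < q)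
    (hk : 2 ≤ k) (hqk : q ^ k ∣ n) (hc : c < (q ^ k : ℕ)) : ∃ s : ℕ, S < s ∧ s ^ 2 ∣ n := by
  refine ⟨q ^ (k / 2), lt_of_pow_lt_pow_left₀ 3 (Nat.cast_nonneg _) ?_, ?_⟩
  · refine (hS.trans_lt hc).trans_le ?_
    rw [← Nat.cast_pow, ← pow_mul]
    exact_mod_cast Nat.pow_le_pow_right hq (by omega)
  · rw [← pow_mul]
    exact (pow_dvd_pow q (Nat.div_mul_le_self k 2)).trans hqk

theorem exists_sq_dvd_or_exists_linked_of_not_cSeparable {c S : ℝ} (hS : S ^ 3 ≤ c) {n : ℕ}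
    (h : ¬CSeparable c n) :
    (∃ s : ℕ, S < s ∧ s ^ 2 ∣ n) ∨
      ∃ p q : ℕ, p.Prime ∧ q.Prime ∧ c < p ∧ q ≡ 1 [MOD p] ∧ p * q ∣ n := by
  simp only [CSeparable, not_forall] at h
  obtain ⟨p, hp, hcp, hpn, q, hq, k, hqk, hmod, hk⟩ := h
  obtain rfl | hk2 : k = 1 ∨ 2 ≤ k := by omega
  · rw [pow_one] at hqk hmod
    have hpq := (Nat.coprime_primes hp hq).2 (lt_of_modEq_one hq.one_lt hmod).ne
    exact Or.inr ⟨p, q, hp, hq, hcp, hmod, hpq.mul_dvd_of_dvd_of_dvd hpn hqk⟩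
  · have hpk : p < q ^ k := lt_of_modEq_one (Nat.one_lt_pow hk hq.one_lt) hmod
    exact Or.inl (exists_sq_dvd_of_pow_dvd hS hq.pos hk2 hqk (hcp.trans (mod_cast hpk)))

theorem exists_mem_linkedPrimePairs {Y N n p q : ℕ} (hn : n ∈ Icc 1 N) (hp : p.Prime)
    (hq : q.Prime) (hYp : Y < p) (hmod : q ≡ 1 [MOD p]) (hpq : p * q ∣ n) :
    ∃ x ∈ linkedPrimePairs Y N, x.1 * x.2 ∣ n := by
  obtain ⟨hn1, hnN⟩ := mem_Icc.1 hn
  have hpN := (Nat.le_of_dvd hn1 (dvd_of_mul_right_dvd hpq)).trans hnN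
  have hqN := (Nat.le_of_dvd hn1 (dvd_of_mul_left_dvd hpq)).trans hnN
  refine ⟨⟨p, q⟩, ?_, hpq⟩
  simp only [linkedPrimePairs, mem_sigma, mem_filter, mem_Ioc,
    mem_Icc]
  exact ⟨⟨⟨hYp, hpN⟩, hp⟩, ⟨hq.one_le, hqN⟩, hq, hmod⟩

theorem exists_mem_Ioc_sq_dvd {S : ℝ} {N n s : ℕ} (hn : n ∈ Icc 1 N) (hs : S < s)
    (hS : 0 ≤ S) (hsn : s ^ 2 ∣ n) : ∃ s ∈ Ioc ⌊S⌋₊ N, s ^ 2 ∣ n := by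
  obtain ⟨hn1, hnN⟩ := mem_Icc.1 hn
  have hsN := ((Nat.le_self_pow two_ne_zero s).trans (Nat.le_of_dvd hn1 hsn)).trans hnN
  exact ⟨s, mem_Ioc.2 ⟨(Nat.floor_lt hS).2 hs, hsN⟩, hsn⟩

theorem log_log_le_log_log_add_log_two {N n : ℕ} (hN : 1 < N) (h : N ≤ n ^ 2) :
    Real.log (Real.log N) ≤ Real.log (Real.log n) + Real.log 2 := by
  have hlogN : 0 < Real.log N := Real.log_pos (mod_cast hN)
  have hlog : Real.log N ≤ Real.log n * 2 := calc
    Real.log N ≤ Real.log ((n : ℝ) ^ 2) :=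
      Real.log_le_log (mod_cast zero_lt_one.trans hN) (mod_cast h)
    _ = Real.log n * 2 := by rw [Real.log_pow, Nat.cast_ofNat, mul_comm]
  rw [← Real.log_mul (by linarith) two_ne_zero]
  exact Real.log_le_log hlogN hlog

/-- The integers whose density is at issue: `n` is `(2, log log n)`-free and
`(log log n)`-separable. -/
def IsLogLogSeparated (n : ℕ) : Prop :=
  TwoCFree (Real.log (Real.log n)) n ∧ CSeparable (Real.log (Real.log n)) n

open Classical in
theorem filter_not_isLogLogSeparated_subset {N Y : ℕ} {S : ℝ} (hY : 1 ≤ Y)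
    (hYN : 2 * (Y : ℝ) ≤ Real.log (Real.log N)) (hS : 0 ≤ S) (hSY : S ^ 3 ≤ Y) :
    {n ∈ Icc 1 N | ¬IsLogLogSeparated n} ⊆ Icc 1 N.sqrt ∪
      {n ∈ Icc 1 N | ∃ s ∈ Ioc ⌊S⌋₊ N, s ^ 2 ∣ n} ∪
      {n ∈ Icc 1 N | ∃ x ∈ linkedPrimePairs Y N, x.1 * x.2 ∣ n} := by
  intro n hn
  obtain ⟨hnN, hbad⟩ := mem_filter.1 hn
  rw [union_assoc, mem_union, mem_union, mem_filter, mem_filter, mem_Icc]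
  refine (le_or_gt n N.sqrt).imp (⟨(mem_Icc.1 hnN).1, ·⟩) fun hsqrt ↦ ?_
  have hY1 : (1 : ℝ) ≤ Y := mod_cast hY
  have hN : 1 < N := by
    by_contra! h
    interval_cases N <;> norm_num at hYN <;> linarith
  have hYn : (Y : ℝ) ≤ Real.log (Real.log n) := by
    linarith [log_log_le_log_log_add_log_two hN (Nat.sqrt_lt'.1 hsqrt).le, Real.log_two_lt_d9]
  have hSn := hSY.trans hYn
  have hcover : (∃ s : ℕ, S < s ∧ s ^ 2 ∣ n) ∨
      ∃ p q : ℕ, p.Prime ∧ q.Prime ∧ Real.log (Real.log n) < p ∧ q ≡ 1 [MOD p] ∧ p * q ∣ n :=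
    (not_and_or.1 hbad).elim (Or.inl ∘ exists_sq_dvd_of_not_twoCFree hSn)
      (exists_sq_dvd_or_exists_linked_of_not_cSeparable hSn)
  rcases hcover with ⟨s, hSs, hsn⟩ | ⟨p, q, hp, hq, hnp, hmod, hpq⟩
  · exact Or.inl ⟨hnN, exists_mem_Ioc_sq_dvd hnN hSs hS hsn⟩
  · have hYp : Y < p := by exact_mod_cast hYn.trans_lt hnp
    exact Or.inr ⟨hnN, exists_mem_linkedPrimePairs hnN hp hq hYp hmod hpq⟩

open Classical in
theorem card_not_isLogLogSeparated_le {N Y : ℕ} (hY : 2 ≤ Y)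
    (hYN : 2 * (Y : ℝ) ≤ Real.log (Real.log N)) (hNY : Real.log (Real.log N) ≤ 2 * (Y + 1)) :
    (#{n ∈ Icc 1 N | ¬IsLogLogSeparated n} : ℝ) ≤
      √N + N * (2 / (Y : ℝ) ^ (3 : ℝ)⁻¹) + N * (288 * Real.log 4 / Real.log Y) := by
  have hY2 : (2 : ℝ) ≤ Y := mod_cast hY
  have hlogY : 0 < Real.log Y := Real.log_pos (mod_cast hY)
  have hlogN : 1 ≤ Real.log N := by
    by_contra! h
    linarith [Real.log_nonpos (Real.log_natCast_nonneg N) h.le]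
  set S : ℝ := (Y : ℝ) ^ (3 : ℝ)⁻¹
  have hS : 0 < S := by positivity
  have hSY : S ^ 3 ≤ Y := (Real.rpow_inv_natCast_pow Y.cast_nonneg three_ne_zero).le
  have hcard := (card_le_card (filter_not_isLogLogSeparated_subset (one_le_two.trans hY) hYN hS.le
    hSY)).trans ((card_union_le _ _).trans (Nat.add_le_add_right (card_union_le _ _) _))
  rw [Nat.card_Icc, Nat.add_sub_cancel] at hcard
  have hpairs : 72 * Real.log 4 * (Real.log (Real.log N) + 2) / (Y * Real.log Y) ≤
      288 * Real.log 4 / Real.log Y := calc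
    _ ≤ 72 * Real.log 4 * (4 * Y) / (Y * Real.log Y) := by
      gcongr
      linarith
    _ = 288 * Real.log 4 / Real.log Y := by
      field_simp
      norm_num
  calc (#{n ∈ Icc 1 N | ¬IsLogLogSeparated n} : ℝ)
      ≤ N.sqrt + #{n ∈ Icc 1 N | ∃ s ∈ Ioc ⌊S⌋₊ N, s ^ 2 ∣ n} +
          #{n ∈ Icc 1 N | ∃ x ∈ linkedPrimePairs Y N, x.1 * x.2 ∣ n} := mod_cast hcard
    _ ≤ √N + N * (2 / S) + N * (288 * Real.log 4 / Real.log Y) := by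
      gcongr
      · exact Real.nat_sqrt_le_real_sqrt
      · exact card_exists_sq_dvd_le hS N
      · refine (card_exists_dvd_le (linkedPrimePairs Y N) (fun x ↦ x.1 * x.2) N).trans ?_
        gcongr
        exact (sum_linkedPrimePairs_inv_mul_le hY hlogN).trans hpairs

end Covering

section Density

open Filter Topology
open scoped Finset

open Classical in
theorem tendsto_natCard_div_of_tendsto_card_not {P : ℕ → Prop}
    (h : Tendsto (fun N : ℕ ↦ (#{n ∈ Finset.Icc 1 N | ¬P n} : ℝ) / N) atTop (𝓝 0)) :
    Tendsto (fun N : ℕ ↦ (Nat.card {n : ℕ | n ∈ Finset.Icc 1 N ∧ P n} : ℝ) / N) atTop (𝓝 1) := by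
  have hsub := h.const_sub 1
  rw [sub_zero] at hsub
  refine hsub.congr' ?_
  filter_upwards [eventually_ne_atTop 0] with N hN
  have hcard : Nat.card {n : ℕ | n ∈ Finset.Icc 1 N ∧ P n} = #{n ∈ Finset.Icc 1 N | P n} := by
    rw [← Finset.coe_filter, Nat.card_coe_set_eq, Set.ncard_coe_finset]
  have hadd : (#{n ∈ Finset.Icc 1 N | P n} : ℝ) + #{n ∈ Finset.Icc 1 N | ¬P n} = N := by
    have := Finset.card_filter_add_card_filter_not (s := Finset.Icc 1 N) P
    rw [Nat.card_Icc, Nat.add_sub_cancel] at this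
    exact_mod_cast this
  rw [hcard, ← add_sub_cancel_right (#{n ∈ Finset.Icc 1 N | P n} : ℝ), hadd, sub_div,
    div_self (Nat.cast_ne_zero.2 hN)]

theorem tendsto_log_log_atTop : Tendsto (fun N : ℕ ↦ Real.log (Real.log N)) atTop atTop :=
  Real.tendsto_log_atTop.comp (Real.tendsto_log_atTop.comp tendsto_natCast_atTop_atTop)

open Classical in
theorem tendsto_card_not_isLogLogSeparated_div :
    Tendsto (fun N : ℕ ↦ (#{n ∈ Finset.Icc 1 N | ¬IsLogLogSeparated n} : ℝ) / N) atTop (𝓝 0) := by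
  set Y : ℕ → ℕ := fun N ↦ ⌊Real.log (Real.log N) / 2⌋₊
  have hY : Tendsto Y atTop atTop :=
    tendsto_nat_floor_atTop.comp (tendsto_log_log_atTop.atTop_div_const two_pos)
  have hY' : Tendsto (fun N ↦ (Y N : ℝ)) atTop atTop := tendsto_natCast_atTop_atTop.comp hY
  have hsqrt : Tendsto (fun N : ℕ ↦ 1 / √(N : ℝ)) atTop (𝓝 0) :=
    (Real.tendsto_sqrt_atTop.comp tendsto_natCast_atTop_atTop).const_div_atTop 1
  have hcube : Tendsto (fun N ↦ 2 / (Y N : ℝ) ^ (3 : ℝ)⁻¹) atTop (𝓝 0) :=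
    ((tendsto_rpow_atTop (by norm_num)).comp hY').const_div_atTop 2
  have hlog : Tendsto (fun N ↦ 288 * Real.log 4 / Real.log (Y N)) atTop (𝓝 0) :=
    (Real.tendsto_log_atTop.comp hY').const_div_atTop _
  have hbound := (hsqrt.add hcube).add hlog
  simp only [add_zero] at hbound
  refine squeeze_zero' (Eventually.of_forall fun N ↦ by positivity) ?_ hbound
  filter_upwards [hY.eventually_ge_atTop 2, eventually_gt_atTop 0] with N hYN hN
  have hN' : (0 : ℝ) < N := mod_cast hN
  have hlow : 2 * (Y N : ℝ) ≤ Real.log (Real.log N) := by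
    have := Nat.floor_le (Nat.pos_of_floor_pos (two_pos.trans_le hYN)).le
    linarith
  have hhigh : Real.log (Real.log N) ≤ 2 * (Y N + 1) := by
    linarith [Nat.lt_floor_add_one (Real.log (Real.log N) / 2)]
  calc (#{n ∈ Finset.Icc 1 N | ¬IsLogLogSeparated n} : ℝ) / N
      ≤ (√N + N * (2 / (Y N : ℝ) ^ (3 : ℝ)⁻¹) + N * (288 * Real.log 4 / Real.log (Y N))) / N := by
        gcongr
        exact card_not_isLogLogSeparated_le hYN hlow hhigh
    _ = 1 / √N + 2 / (Y N : ℝ) ^ (3 : ℝ)⁻¹ + 288 * Real.log 4 / Real.log (Y N) := by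
        rw [add_div, add_div, Real.sqrt_div_self', mul_div_cancel_left₀ _ hN'.ne',
          mul_div_cancel_left₀ _ hN'.ne']

end Density

/-- The set of positive integers `n` that are both `(2, log log n)`-free and
`(log log n)`-separable has natural density `1`. -/
theorem twoFree_separable_density_one :
    Filter.Tendsto (fun N : ℕ =>
      (Nat.card {n : ℕ | n ∈ Finset.Icc 1 N ∧
        TwoCFree (Real.log (Real.log n)) n ∧ CSeparable (Real.log (Real.log n)) n} : ℝ) / N)
      Filter.atTop (nhds 1) :=
  tendsto_natCard_div_of_tendsto_card_not tendsto_card_not_isLogLogSeparated_div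
end

section
/- Let G be a finite group that is an internal semidirect product G = A ⋉ B, where B ⊴ G, A ≤ G, A ∩ B = 1, AB = G, and A and B are cyclic of coprime orders. Let Z be the subgroup of G generated by all the normal Sylow subgroups of G (over all primes dividing |G|). Then Z is a cyclic normal Hall subgroup of G containing B, and Z has a cyclic complement U in G; in particular G = U ⋉ Z with U and Z cyclic of coprime orders, |B| divides |Z|, and |U| and |Z| depend only on the isomorphism type of G. -/
/-- The subgroup of `G` generated by all the normal Sylow subgroups of `G`
(over all primes dividing the order of `G`). -/
def normalSylowProd (G : Type*) [Group G] : Subgroup G :=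
  ⨆ (p : ℕ) (_ : p.Prime) (P : Sylow p G) (_ : (P : Subgroup G).Normal), (P : Subgroup G)

/-!
A semidirect product of cyclic groups of coprime orders is a Z-group: all its Sylow subgroups are
cyclic. In any finite group, a prime dividing the order of the subgroup `Z` generated by the normal
Sylow subgroups has a normal Sylow subgroup, which then lies in `Z`; hence `Z` is a nilpotent Hall
subgroup, and it contains every normal nilpotent Hall subgroup `B`, because the Sylow subgroups of
`B` are normal Sylow subgroups of the whole group. In a Z-group nilpotent subgroups are cyclic, so
`Z` is cyclic. The commutator subgroup of a Z-group is a cyclic Hall subgroup with cyclic quotient;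
so it lies in `Z`, and the quotient by `Z`, isomorphic to every complement of `Z`, is cyclic too.
-/

section Subgroups

variable {G : Type*} [Group G]

theorem card_sup_dvd_card_mul_card (H K : Subgroup G) [K.Normal] :
    Nat.card (H ⊔ K : Subgroup G) ∣ Nat.card H * Nat.card K := by
  have hcard : K.relIndex H * Nat.card K = Nat.card (H ⊔ K : Subgroup G) := by
    rw [← Subgroup.relIndex_sup_right H K, mul_comm, ← Subgroup.relIndex_bot_left,
      ← Subgroup.relIndex_bot_left]
    exact Subgroup.relIndex_mul_relIndex _ _ _ bot_le le_sup_right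
  rw [← hcard]
  exact Nat.mul_dvd_mul_right (Subgroup.relIndex_dvd_card K H) _

theorem exists_mem_dvd_card_of_dvd_card_sSup [Finite G] {p : ℕ} (hp : p.Prime)
    {S : Set (Subgroup G)} (hS : ∀ N ∈ S, N.Normal) (hdvd : p ∣ Nat.card ↥(sSup S)) :
    ∃ N ∈ S, p ∣ Nat.card N := by
  induction S, S.toFinite using Set.Finite.induction_on with
  | empty =>
    rw [sSup_empty, Subgroup.card_bot] at hdvd
    exact absurd hdvd hp.not_dvd_one
  | @insert N S _ _ ih =>
    rw [Set.forall_mem_insert] at hS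
    have := Subgroup.sSup_normal S hS.2
    rw [sSup_insert] at hdvd
    rcases hp.dvd_mul.1 (hdvd.trans (card_sup_dvd_card_mul_card N (sSup S))) with hN | hsSup
    · exact ⟨N, Set.mem_insert N S, hN⟩
    · obtain ⟨M, hMS, hM⟩ := ih hS.2 hsSup
      exact ⟨M, Set.mem_insert_of_mem N hMS, hM⟩

theorem eq_top_of_forall_exists_sylow_le [Finite G] {K : Subgroup G}
    (hK : ∀ p : ℕ, p.Prime → p ∣ Nat.card G → ∃ P : Sylow p G, (P : Subgroup G) ≤ K) :
    K = ⊤ := by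
  rw [← Subgroup.index_eq_one]
  by_contra hindex
  obtain ⟨p, hp, hdvd⟩ := Nat.exists_prime_and_dvd hindex
  have := Fact.mk hp
  obtain ⟨P, hPK⟩ := hK p hp (hdvd.trans K.index_dvd_card)
  exact P.not_dvd_index (hdvd.trans (Subgroup.index_dvd_of_le hPK))

theorem index_dvd_card_of_sup_eq_top {A B : Subgroup G} [B.Normal] (hsup : A ⊔ B = ⊤) :
    B.index ∣ Nat.card A := by
  rw [← Subgroup.relIndex_top_right, ← hsup, Subgroup.relIndex_sup_right]
  exact Subgroup.relIndex_dvd_card B A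

end Subgroups

section NormalSylowProd

variable {G : Type*} [Group G]

theorem sylow_le_normalSylowProd {p : ℕ} (hp : p.Prime) (P : Sylow p G)
    (hP : (P : Subgroup G).Normal) : (P : Subgroup G) ≤ normalSylowProd G :=
  le_iSup₂_of_le p hp (le_iSup₂_of_le P hP le_rfl)

theorem normalSylowProd_le {K : Subgroup G}
    (hK : ∀ p : ℕ, p.Prime → ∀ P : Sylow p G, (P : Subgroup G).Normal → (P : Subgroup G) ≤ K) :
    normalSylowProd G ≤ K :=
  iSup₂_le fun p hp => iSup₂_le (hK p hp)

theorem normalSylowProd_le_map {G' : Type*} [Group G'] (e : G ≃* G') :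
    normalSylowProd G' ≤ (normalSylowProd G).map (e : G →* G') := by
  refine normalSylowProd_le fun p hp P hP => ?_
  have hcomap := sylow_le_normalSylowProd hp
    (P.comapOfInjective (e : G →* G') e.injective fun x _ => e.surjective x)
    (hP.comap (e : G →* G'))
  rw [← Subgroup.map_comap_eq_self_of_surjective (f := (e : G →* G')) e.surjective P]
  exact Subgroup.map_mono hcomap

theorem map_normalSylowProd {G' : Type*} [Group G'] (e : G ≃* G') :
    (normalSylowProd G).map (e : G →* G') = normalSylowProd G' := by
  refine le_antisymm ?_ (normalSylowProd_le_map e)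
  rw [Subgroup.map_le_iff_le_comap, Subgroup.comap_equiv_eq_map_symm]
  exact normalSylowProd_le_map e.symm

instance normalSylowProd_characteristic : (normalSylowProd G).Characteristic :=
  Subgroup.characteristic_iff_map_eq.2 map_normalSylowProd

variable [Finite G]

theorem exists_normal_sylow_of_dvd_card_normalSylowProd {p : ℕ} (hp : p.Prime)
    (hdvd : p ∣ Nat.card (normalSylowProd G)) :
    ∃ P : Sylow p G, (P : Subgroup G).Normal := by
  let S : Set (Subgroup G) :=
    {N | N.Normal ∧ ∃ (q : ℕ) (_ : q.Prime) (Q : Sylow q G), (Q : Subgroup G) = N}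
  have hle : normalSylowProd G ≤ sSup S :=
    normalSylowProd_le fun q hq Q hQ => le_sSup ⟨hQ, q, hq, Q, rfl⟩
  obtain ⟨_, ⟨hQ, q, hq, Q, rfl⟩, hpQ⟩ := exists_mem_dvd_card_of_dvd_card_sSup hp
    (fun _ hN => hN.1) (hdvd.trans (Subgroup.card_dvd_of_le hle))
  have := Fact.mk hq
  rw [Q.card_eq_multiplicity] at hpQ
  obtain rfl := (Nat.prime_dvd_prime_iff_eq hp hq).1 (hp.dvd_of_dvd_pow hpQ)
  exact ⟨Q, hQ⟩

variable (G) in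
theorem coprime_card_index_normalSylowProd :
    Nat.Coprime (Nat.card (normalSylowProd G)) (normalSylowProd G).index := by
  refine Nat.coprime_of_dvd fun p hp hcard hindex => ?_
  have := Fact.mk hp
  obtain ⟨P, hP⟩ := exists_normal_sylow_of_dvd_card_normalSylowProd hp hcard
  exact P.not_dvd_index (hindex.trans (Subgroup.index_dvd_of_le (sylow_le_normalSylowProd hp P hP)))

instance normalSylowProd_isNilpotent : Group.IsNilpotent (normalSylowProd G) := by
  refine ((Group.isNilpotent_of_finite_tfae (G := normalSylowProd G)).out 0 3).2 ?_
  intro p hp Q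
  by_cases hdvd : p ∣ Nat.card (normalSylowProd G)
  · obtain ⟨P, hP⟩ := exists_normal_sylow_of_dvd_card_normalSylowProd hp.out hdvd
    let P' : Sylow p (normalSylowProd G) := P.subtype (sylow_le_normalSylowProd hp.out P hP)
    have hP' : (P' : Subgroup (normalSylowProd G)).Normal := hP.subgroupOf _
    have := P'.unique_of_normal hP'
    rwa [Subsingleton.elim Q P']
  · have hQ : (Q : Subgroup (normalSylowProd G)) = ⊥ := by
      rw [← Subgroup.card_eq_one, Q.card_eq_multiplicity,
        Nat.factorization_eq_zero_of_not_dvd hdvd, pow_zero]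
    rw [hQ]
    infer_instance

theorem sylow_map_subtype_le_normalSylowProd {B : Subgroup G} [B.Normal]
    (hB : Nat.Coprime (Nat.card B) B.index) {p : ℕ} (hp : p.Prime) (hdvd : p ∣ Nat.card B)
    (Q : Sylow p B) (hQ : (Q : Subgroup B).Normal) :
    (Q : Subgroup B).map B.subtype ≤ normalSylowProd G := by
  have := Fact.mk hp
  have := Q.characteristic_of_normal hQ
  have hindex : ¬ p ∣ ((Q : Subgroup B).map B.subtype).index := by
    rw [Subgroup.index_map_subtype]
    exact hp.not_dvd_mul Q.not_dvd_index
      fun hdvd' => Nat.not_coprime_of_dvd_of_dvd hp.one_lt hdvd hdvd' hB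
  have hnormal : ((Q : Subgroup B).map B.subtype).Normal := inferInstance
  exact sylow_le_normalSylowProd hp ((Q.isPGroup'.map B.subtype).toSylow hindex) hnormal

theorem le_normalSylowProd {B : Subgroup G} [B.Normal] [Group.IsNilpotent B]
    (hB : Nat.Coprime (Nat.card B) B.index) : B ≤ normalSylowProd G := by
  rw [← Subgroup.subgroupOf_eq_top]
  refine eq_top_of_forall_exists_sylow_le fun p hp hdvd => ?_
  have := Fact.mk hp
  obtain ⟨Q⟩ : Nonempty (Sylow p B) := inferInstance
  exact ⟨Q, Subgroup.map_le_iff_le_comap.1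
    (sylow_map_subtype_le_normalSylowProd hB hp hdvd Q inferInstance)⟩

end NormalSylowProd

section ZGroup

theorem isNilpotent_of_isCyclic (G : Type*) [Group G] [IsCyclic G] : Group.IsNilpotent G :=
  let _ : CommGroup G := IsCyclic.commGroup
  CommGroup.isNilpotent

variable {G : Type*} [Group G] [Finite G]

theorem isZGroup_of_sup_eq_top_of_coprime {A B : Subgroup G} [B.Normal] [IsZGroup A] [IsZGroup B]
    (hsup : A ⊔ B = ⊤) (hcop : Nat.Coprime (Nat.card A) (Nat.card B)) : IsZGroup G := by
  have hsurj : Function.Surjective ((QuotientGroup.mk' B).comp A.subtype) := by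
    rw [← MonoidHom.range_eq_top, MonoidHom.range_comp, Subgroup.range_subtype]
    simpa only [Subgroup.map_sup, QuotientGroup.map_mk'_self, sup_bot_eq,
      Subgroup.map_top_of_surjective _ (QuotientGroup.mk'_surjective B)]
      using congrArg (Subgroup.map (QuotientGroup.mk' B)) hsup
  have : IsZGroup (G ⧸ B) := IsZGroup.of_surjective hsurj
  have hHall : Nat.Coprime (Nat.card B) (Nat.card (G ⧸ B)) :=
    (hcop.coprime_dvd_left (index_dvd_card_of_sup_eq_top hsup)).symm
  exact isZGroup_of_coprime (f := B.subtype) (f' := QuotientGroup.mk' B)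
    (by rw [QuotientGroup.ker_mk', Subgroup.range_subtype]) hHall

variable [IsZGroup G]

theorem commutator_le_normalSylowProd : commutator G ≤ normalSylowProd G := by
  have := IsZGroup.isCyclic_commutator G
  have := isNilpotent_of_isCyclic (commutator G)
  exact le_normalSylowProd (IsZGroup.coprime_commutator_index G)

instance isCyclic_quotient_normalSylowProd : IsCyclic (G ⧸ normalSylowProd G) :=
  have : IsCyclic (G ⧸ commutator G) := IsZGroup.isCyclic_abelianization
  isCyclic_of_surjective
    (QuotientGroup.map (commutator G) (normalSylowProd G) (MonoidHom.id G)
      commutator_le_normalSylowProd)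
    (QuotientGroup.map_surjective_of_surjective _ _ _ QuotientGroup.mk_surjective _)

variable (G) in
theorem exists_isCyclic_isComplement'_normalSylowProd :
    ∃ U : Subgroup G, IsCyclic U ∧ U.IsComplement' (normalSylowProd G) := by
  obtain ⟨U, hU⟩ :=
    Subgroup.exists_left_complement'_of_coprime (coprime_card_index_normalSylowProd G)
  exact ⟨U, hU.QuotientMulEquiv.isCyclic.1 inferInstance, hU⟩

end ZGroup

theorem coprime_metacyclic_canonical_decomposition_general (G : Type*) [Group G] [Finite G]
    [IsZGroup G] (B : Subgroup G) [B.Normal] [Group.IsNilpotent B]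
    (hB : Nat.Coprime (Nat.card B) B.index) :
    IsCyclic (normalSylowProd G) ∧ (normalSylowProd G).Normal ∧
    Nat.Coprime (Nat.card (normalSylowProd G)) (normalSylowProd G).index ∧
    B ≤ normalSylowProd G ∧
    (∃ U : Subgroup G, IsCyclic U ∧ U ⊓ normalSylowProd G = ⊥ ∧
      U ⊔ normalSylowProd G = ⊤ ∧
      Nat.Coprime (Nat.card U) (Nat.card (normalSylowProd G))) ∧
    ∀ (G' : Type*) [Group G'], Nonempty (G ≃* G') →
      Nat.card (normalSylowProd G') = Nat.card (normalSylowProd G) ∧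
      (normalSylowProd G').index = (normalSylowProd G).index := by
  have hHall := coprime_card_index_normalSylowProd G
  refine ⟨inferInstance, inferInstance, hHall, le_normalSylowProd hB, ?_, ?_⟩
  · obtain ⟨U, hUcyc, hU⟩ := exists_isCyclic_isComplement'_normalSylowProd G
    exact ⟨U, hUcyc, hU.disjoint.eq_bot, hU.sup_eq_top, hU.index_eq_card ▸ hHall.symm⟩
  · rintro G' _ ⟨e⟩
    rw [← map_normalSylowProd e]
    exact ⟨Subgroup.card_map_of_injective e.injective, Subgroup.index_map_equiv _ e⟩

/-- If a finite group `G` is an internal semidirect product of cyclic subgroups `A` and `B`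
of coprime orders with `B` normal, and `Z` is the subgroup generated by all normal Sylow
subgroups of `G`, then `Z` is a cyclic normal Hall subgroup containing `B` with a cyclic
complement `U` of order coprime to `|Z|`; moreover `|Z|` and `|U| = [G:Z]` are invariants
of the isomorphism type of `G`. -/
theorem coprime_metacyclic_canonical_decomposition (G : Type*) [Group G] [Finite G]
    (A B : Subgroup G) [B.Normal] (hinf : A ⊓ B = ⊥) (hsup : A ⊔ B = ⊤)
    (hA : IsCyclic A) (hB : IsCyclic B)
    (hcop : Nat.Coprime (Nat.card A) (Nat.card B)) :
    IsCyclic (normalSylowProd G) ∧ (normalSylowProd G).Normal ∧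
    Nat.Coprime (Nat.card (normalSylowProd G)) (normalSylowProd G).index ∧
    B ≤ normalSylowProd G ∧
    (∃ U : Subgroup G, IsCyclic U ∧ U ⊓ normalSylowProd G = ⊥ ∧
      U ⊔ normalSylowProd G = ⊤ ∧
      Nat.Coprime (Nat.card U) (Nat.card (normalSylowProd G))) ∧
    ∀ (G' : Type*) [Group G'] [Finite G'], Nonempty (G ≃* G') →
      Nat.card (normalSylowProd G') = Nat.card (normalSylowProd G) ∧
      (normalSylowProd G').index = (normalSylowProd G).index := by
  have := isZGroup_of_sup_eq_top_of_coprime hsup hcop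
  have := isNilpotent_of_isCyclic B
  obtain ⟨hcyclic, hnormal, hHall, hle, hcompl, hinv⟩ :=
    coprime_metacyclic_canonical_decomposition_general G B
      (hcop.coprime_dvd_left (index_dvd_card_of_sup_eq_top hsup)).symm
  exact ⟨hcyclic, hnormal, hHall, hle, hcompl, fun G' _ _ => hinv G'⟩
end

section
/- Let c, d be positive integers and let θ, θ' : ℤ/c → Aut(ℤ/d) be group homomorphisms from the additive group ℤ/c to the automorphism group of the additive group ℤ/d. Then there exists a group isomorphism γ : (ℤ/d) ⋊_θ (ℤ/c) → (ℤ/d) ⋊_{θ'} (ℤ/c) mapping the subgroup {(b,0) : b ∈ ℤ/d} onto the subgroup {(b,0) : b ∈ ℤ/d} if and only if θ and θ' have the same image in Aut(ℤ/d). -/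
/-!
An isomorphism `γ` matching the two copies of an abelian normal factor restricts to some
`α : N₁ ≃* N₂`. As `N₁` acts trivially on itself by conjugation, conjugation by `x` on the copy of
`N₁` is `φ₁ x.right`, so `α` transports the image of `φ₁` to that of `φ₂`.

Conversely, generators of a quotient of a finite cyclic group lift to generators, because
`(ℤ/n)ˣ → (ℤ/m)ˣ` is surjective for `m ∣ n`. Two homomorphisms from finite cyclic groups of the same
order with the same image therefore differ by an isomorphism of their sources, which together with
`α` yields an isomorphism of semidirect products.

For cyclic `N₁ = N₂` the automorphism group is abelian, so transport along `α` does nothing.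
-/

open Subgroup

lemma exists_coprime_modEq_of_dvd {k m n : ℕ} [NeZero n] (hmn : m ∣ n) (hk : k.Coprime m) :
    ∃ l : ℕ, l.Coprime n ∧ l ≡ k [MOD m] := by
  obtain ⟨u, hu⟩ := ZMod.unitsMap_surjective hmn (ZMod.unitOfCoprime k hk)
  refine ⟨(u : ZMod n).val, ZMod.val_coe_unit_coprime u, ?_⟩
  have hu_val : ((u : ZMod n).cast : ZMod m) = k := congrArg Units.val hu
  rwa [← ZMod.natCast_eq_natCast_iff, ZMod.natCast_val]

lemma exists_zpowers_eq_top_and_map_eq {G H : Type*} [Group G] [IsCyclic G] [Finite G] [Group H]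
    (f : G →* H) {h : H} (hh : zpowers h = f.range) : ∃ g : G, zpowers g = ⊤ ∧ f g = h := by
  obtain ⟨t, ht⟩ := isCyclic_iff_exists_zpowers_eq_top.mp ‹IsCyclic G›
  have hft : zpowers (f t) = zpowers h := by
    rw [hh, ← f.map_zpowers, ht, ← f.range_eq_map]
  obtain ⟨k, hk⟩ : ∃ k : ℕ, f t ^ k = h :=
    (f.isOfFinOrder (isOfFinOrder_of_finite t)).mem_powers_iff_mem_zpowers.mpr (hft ▸ mem_zpowers h)
  have hk_coprime : k.Coprime (orderOf (f t)) :=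
    mem_zpowers_pow_iff.mp (hk ▸ hft ▸ mem_zpowers (f t))
  have : NeZero (orderOf t) := ⟨(orderOf_pos t).ne'⟩
  obtain ⟨l, hl_coprime, hlk⟩ := exists_coprime_modEq_of_dvd (orderOf_map_dvd f t) hk_coprime
  refine ⟨t ^ l, ?_, ?_⟩
  · rw [eq_top_iff, ← ht, zpowers_le]
    exact mem_zpowers_pow_iff.mpr hl_coprime
  · rw [map_pow, ← hk]
    exact pow_eq_pow_iff_modEq.mpr hlk

lemma exists_mulEquiv_comp_eq_of_range_eq {G₁ G₂ H : Type*} [Group G₁] [Group G₂] [Group H]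
    [IsCyclic G₁] [IsCyclic G₂] [Finite G₂] (hcard : Nat.card G₁ = Nat.card G₂)
    {f₁ : G₁ →* H} {f₂ : G₂ →* H} (h : f₁.range = f₂.range) :
    ∃ β : G₁ ≃* G₂, f₂.comp β.toMonoidHom = f₁ := by
  obtain ⟨g₁, hg₁⟩ := isCyclic_iff_exists_zpowers_eq_top.mp ‹IsCyclic G₁›
  have hf₁ : zpowers (f₁ g₁) = f₂.range := by
    rw [← h, ← f₁.map_zpowers, hg₁, ← f₁.range_eq_map]
  obtain ⟨g₂, hg₂, hf₂⟩ := exists_zpowers_eq_top_and_map_eq f₂ hf₁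
  have hgen₁ := (eq_top_iff' _).mp hg₁
  have hgen₂ := (eq_top_iff' _).mp hg₂
  have horder : orderOf g₁ = orderOf g₂ := by
    rw [orderOf_eq_card_of_forall_mem_zpowers hgen₁, hcard,
      orderOf_eq_card_of_forall_mem_zpowers hgen₂]
  refine ⟨mulEquivOfOrderOfEq hgen₁ hgen₂ horder, ?_⟩
  simp [MonoidHom.eq_iff_eq_on_generator hgen₁, hf₂]

lemma isMulCommutative_mulAut (N : Type*) [Group N] [IsCyclic N] :
    IsMulCommutative (MulAut N) :=
  ⟨⟨fun σ τ => (IsCyclic.mulAutMulEquiv N).injective (by rw [map_mul, map_mul, mul_comm])⟩⟩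

lemma map_mulAutCongr_eq_self {N : Type*} [Group N] [IsCyclic N] (α : N ≃* N)
    (H : Subgroup (MulAut N)) : H.map (MulAut.congr α).toMonoidHom = H := by
  have := isMulCommutative_mulAut N
  exact Normal.map_conj_eq H (α : MulAut N)

lemma exists_mulEquiv_map_apply_eq {N₁ N₂ K₁ K₂ : Type*} [Group N₁] [Group N₂] [Group K₁]
    [Group K₂] {f₁ : N₁ →* K₁} {f₂ : N₂ →* K₂} (hf₁ : Function.Injective f₁)
    (hf₂ : Function.Injective f₂) (γ : K₁ ≃* K₂) (h : f₁.range.map γ.toMonoidHom = f₂.range) :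
    ∃ α : N₁ ≃* N₂, ∀ n, γ (f₁ n) = f₂ (α n) := by
  let ρ : f₁.range ≃* f₂.range := (γ.subgroupMap f₁.range).trans (MulEquiv.subgroupCongr h)
  exact ⟨(MonoidHom.ofInjective hf₁).trans (ρ.trans (MonoidHom.ofInjective hf₂).symm), fun n =>
    (MonoidHom.apply_ofInjective_symm hf₂ (ρ (MonoidHom.ofInjective hf₁ n))).symm⟩

section SemidirectProduct

open SemidirectProduct

lemma inl_apply_right_eq_conj {N G : Type*} [CommGroup N] [Group G] {φ : G →* MulAut N}
    (x : N ⋊[φ] G) (n : N) : inl (φ x.right n) = x * inl n * x⁻¹ := by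
  ext <;> simp

variable {N₁ N₂ G₁ G₂ : Type*}

lemma map_mulAutCongr_range_eq [CommGroup N₁] [CommGroup N₂] [Group G₁] [Group G₂]
    {φ₁ : G₁ →* MulAut N₁} {φ₂ : G₂ →* MulAut N₂} {γ : N₁ ⋊[φ₁] G₁ ≃* N₂ ⋊[φ₂] G₂}
    {α : N₁ ≃* N₂} (hα : ∀ n, γ (inl n) = inl (α n)) :
    φ₁.range.map (MulAut.congr α).toMonoidHom = φ₂.range := by
  have transport (x : N₁ ⋊[φ₁] G₁) : MulAut.congr α (φ₁ x.right) = φ₂ (γ x).right := by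
    ext n
    apply inl_injective (φ := φ₂)
    calc inl (α (φ₁ x.right (α.symm n)))
        = γ x * γ (inl (α.symm n)) * (γ x)⁻¹ := by
          rw [← hα, inl_apply_right_eq_conj, map_mul, map_mul, map_inv]
      _ = inl (φ₂ (γ x).right n) := by
          rw [hα, α.apply_symm_apply, inl_apply_right_eq_conj]
  ext σ
  constructor
  · rintro ⟨_, ⟨g, rfl⟩, rfl⟩
    exact ⟨(γ (inr g)).right, (transport (inr g)).symm⟩
  · rintro ⟨g, rfl⟩
    refine ⟨_, ⟨(γ.symm (inr g)).right, rfl⟩, (transport _).trans ?_⟩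
    rw [γ.apply_symm_apply, right_inr]

lemma map_congr_range_inl [Group N₁] [Group N₂] [Group G₁] [Group G₂]
    {φ₁ : G₁ →* MulAut N₁} {φ₂ : G₂ →* MulAut N₂} (α : N₁ ≃* N₂) (β : G₁ ≃* G₂)
    (h : ∀ g, (φ₁ g).trans α = α.trans (φ₂ (β g))) :
    (inl (φ := φ₁)).range.map (SemidirectProduct.congr α β h).toMonoidHom =
      (inl (φ := φ₂)).range := by
  have hcomp : (SemidirectProduct.congr α β h).toMonoidHom.comp inl = inl.comp α.toMonoidHom := by
    ext <;> simp
  rw [← MonoidHom.range_comp, hcomp, MonoidHom.range_comp, MonoidHom.range_eq_top.mpr α.surjective,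
    ← MonoidHom.range_eq_map]

theorem semidirectProduct_zmod_iso_iff_range_eq_general [CommGroup N₁] [CommGroup N₂] [Group G₁]
    [Group G₂] [IsCyclic G₁] [IsCyclic G₂] [Finite G₂] (hcard : Nat.card G₁ = Nat.card G₂)
    (φ₁ : G₁ →* MulAut N₁) (φ₂ : G₂ →* MulAut N₂) :
    (∃ γ : N₁ ⋊[φ₁] G₁ ≃* N₂ ⋊[φ₂] G₂,
      (inl (φ := φ₁)).range.map γ.toMonoidHom = (inl (φ := φ₂)).range) ↔
    ∃ α : N₁ ≃* N₂, φ₁.range.map (MulAut.congr α).toMonoidHom = φ₂.range := by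
  constructor
  · rintro ⟨γ, hγ⟩
    obtain ⟨α, hα⟩ := exists_mulEquiv_map_apply_eq inl_injective inl_injective γ hγ
    exact ⟨α, map_mulAutCongr_range_eq hα⟩
  · rintro ⟨α, hα⟩
    rw [← MonoidHom.range_comp] at hα
    obtain ⟨β, hβ⟩ := exists_mulEquiv_comp_eq_of_range_eq hcard hα
    have compat (g : G₁) : (φ₁ g).trans α = α.trans (φ₂ (β g)) := by
      have hβg : φ₂ (β g) = MulAut.congr α (φ₁ g) := DFunLike.congr_fun hβ g
      ext n
      simp [hβg]
    exact ⟨SemidirectProduct.congr α β compat, map_congr_range_inl α β compat⟩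

end SemidirectProduct

/-- For homomorphisms `θ, θ' : ℤ/c → Aut(ℤ/d)`, there is an isomorphism of the semidirect
products `(ℤ/d) ⋊[θ] (ℤ/c) ≃* (ℤ/d) ⋊[θ'] (ℤ/c)` carrying the canonical copy of `ℤ/d`
onto the canonical copy of `ℤ/d` if and only if `θ` and `θ'` have the same image in
`Aut(ℤ/d)`. -/
theorem semidirectProduct_zmod_iso_iff_range_eq (c d : ℕ) (hc : 0 < c) (hd : 0 < d)
    (θ θ' : Multiplicative (ZMod c) →* MulAut (Multiplicative (ZMod d))) :
    (∃ γ : (Multiplicative (ZMod d) ⋊[θ] Multiplicative (ZMod c)) ≃*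
        (Multiplicative (ZMod d) ⋊[θ'] Multiplicative (ZMod c)),
      Subgroup.map γ.toMonoidHom (SemidirectProduct.inl (φ := θ)).range =
        (SemidirectProduct.inl (φ := θ')).range) ↔
    θ.range = θ'.range := by
  have : NeZero c := ⟨hc.ne'⟩
  rw [semidirectProduct_zmod_iso_iff_range_eq_general rfl]
  simp only [map_mulAutCongr_eq_self, exists_const]
end

section
/- Let G be a group, let y ∈ G have order 2^f for some f ≥ 0, and let x ∈ G have finite odd order. If x⁻¹yx ∈ ⟨y⟩, then x and y commute, i.e., x⁻¹yx = y. -/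
/-!
An element `x` normalizing `⟨y⟩` acts on it by conjugation, as an automorphism whose order divides
both the order of `x` and `|Aut ⟨y⟩|`. When `y` has order `2 ^ f`, `|Aut ⟨y⟩| = φ(2 ^ f)` is a power
of two, so an `x` of odd order acts trivially. The inclusion `x⁻¹⟨y⟩x ≤ ⟨y⟩` alone makes `x`
normalize `⟨y⟩` because `x` has finite order, so that its inverse is one of its powers.
-/

section Normalizer

variable {G : Type*} [Group G] {H : Subgroup G} {g : G}

theorem conj_pow_mem_of_conj_mem (hconj : ∀ a ∈ H, g * a * g⁻¹ ∈ H) (n : ℕ) {a : G} (ha : a ∈ H) :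
    g ^ n * a * (g ^ n)⁻¹ ∈ H := by
  induction n with
  | zero => simpa using ha
  | succ n ih =>
    have conj_succ : g ^ (n + 1) * a * (g ^ (n + 1))⁻¹ = g * (g ^ n * a * (g ^ n)⁻¹) * g⁻¹ := by
      rw [pow_succ']
      group
    exact conj_succ ▸ hconj _ ih

theorem mem_normalizer_of_isOfFinOrder (hg : IsOfFinOrder g)
    (hconj : ∀ a ∈ H, g * a * g⁻¹ ∈ H) : g ∈ Subgroup.normalizer (H : Set G) := by
  obtain ⟨n, hn : g ^ n = g⁻¹⟩ :=
    hg.mem_powers_iff_mem_zpowers.mpr (inv_mem (Subgroup.mem_zpowers g))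
  refine Subgroup.mem_normalizer_iff.mpr fun a ↦ ⟨hconj a, fun ha ↦ ?_⟩
  simpa [hn, mul_assoc] using conj_pow_mem_of_conj_mem hconj n ha

theorem mem_centralizer_of_coprime_card_mulAut (hg : g ∈ Subgroup.normalizer (H : Set G))
    (hcoprime : (orderOf g).Coprime (Nat.card (MulAut H))) :
    g ∈ Subgroup.centralizer (H : Set G) := by
  let conj := H.normalizerMonoidHom
  have order_dvd : orderOf (conj ⟨g, hg⟩) ∣ orderOf g := by
    simpa only [Subgroup.orderOf_mk] using orderOf_map_dvd conj ⟨g, hg⟩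
  have conj_eq_one : conj ⟨g, hg⟩ = 1 :=
    orderOf_eq_one_iff.mp (Nat.eq_one_of_dvd_coprimes hcoprime order_dvd (orderOf_dvd_natCard _))
  have mem_ker : (⟨g, hg⟩ : Subgroup.normalizer (H : Set G)) ∈ conj.ker := conj_eq_one
  rwa [Subgroup.normalizerMonoidHom_ker, Subgroup.mem_subgroupOf] at mem_ker

end Normalizer

theorem card_mulAut_zpowers {G : Type*} [Group G] {y : G} (hy : IsOfFinOrder y) :
    Nat.card (MulAut (Subgroup.zpowers y)) = (orderOf y).totient := by
  have : Finite (Subgroup.zpowers y) := hy.finite_zpowers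
  rw [IsCyclic.card_mulAut, Nat.card_zpowers]

theorem coprime_totient_two_pow_of_odd {m : ℕ} (hm : Odd m) (f : ℕ) :
    m.Coprime (2 ^ f).totient := by
  cases f with
  | zero => simp
  | succ f =>
    simpa [Nat.totient_prime_pow_succ Nat.prime_two] using hm.coprime_two_right.pow_right f

theorem conj_eq_self_of_odd_order_general {G : Type*} [Group G] {x y : G} (hx : IsOfFinOrder x)
    (hcoprime : (orderOf x).Coprime (Nat.card (MulAut (Subgroup.zpowers y))))
    (h : x⁻¹ * y * x ∈ Subgroup.zpowers y) : x⁻¹ * y * x = y := by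
  have conj_mem : ∀ a ∈ Subgroup.zpowers y, x⁻¹ * a * x⁻¹⁻¹ ∈ Subgroup.zpowers y := by
    rintro _ ⟨n, rfl⟩
    have conj_zpow_eq : (x⁻¹ * y * x⁻¹⁻¹) ^ n = x⁻¹ * y ^ n * x⁻¹⁻¹ := conj_zpow
    exact conj_zpow_eq ▸ zpow_mem ((inv_inv x).symm ▸ h) n
  have mem_centralizer : x⁻¹ ∈ Subgroup.centralizer (Subgroup.zpowers y : Set G) :=
    mem_centralizer_of_coprime_card_mulAut (mem_normalizer_of_isOfFinOrder hx.inv conj_mem)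
      (by rwa [orderOf_inv])
  have commute : y * x⁻¹ = x⁻¹ * y :=
    Subgroup.mem_centralizer_iff.mp mem_centralizer y (Subgroup.mem_zpowers y)
  rw [← commute, inv_mul_cancel_right]

/-- If `y` has order `2 ^ f`, `x` has finite odd order, and `x⁻¹ * y * x ∈ ⟨y⟩`,
then `x` and `y` commute. -/
theorem conj_eq_self_of_odd_order (G : Type*) [Group G] (x y : G) (f : ℕ)
    (hy : orderOf y = 2 ^ f) (hx : Odd (orderOf x)) (hx0 : 0 < orderOf x)
    (h : x⁻¹ * y * x ∈ Subgroup.zpowers y) :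
    x⁻¹ * y * x = y := by
  have card_mulAut : Nat.card (MulAut (Subgroup.zpowers y)) = (2 ^ f).totient :=
    hy ▸ card_mulAut_zpowers (orderOf_pos_iff.mp (hy ▸ Nat.two_pow_pos f))
  exact conj_eq_self_of_odd_order_general (orderOf_pos_iff.mp hx0)
    (card_mulAut ▸ coprime_totient_two_pow_of_odd hx f) h
end
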